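/- arXiv:1301.0727 — 3 statements merged into one kernel-verified Lean document; each statement's English description precedes it below -/
import Mathlib

section
/- Fix a ∈ ℝ. There exists a solution (Φ, W, Ψ, θ) of system (D) defined for all τ ∈ ℝ, with Φ(τ) > 0 and θ(τ) ∈ [−π/2, π/2] for all τ, such that (Φ(τ), W(τ), Ψ(τ), θ(τ)) → (1, 0, 0, π/2) as τ → +∞ and (Φ(τ), W(τ), Ψ(τ), θ(τ)) → (1, 0, 0, −π/2) as τ → −∞ (a heteroclinic connection from p₋ to p₊). -/
open Filter Real

/-- The right-hand side of the `Ψ` equation in system (D). -/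
noncomputable def dPsi (a Φ W Ψ θ : ℝ) : ℝ :=
  1 / Φ ^ 3 - 1 - (a - 1) * Real.cos θ ^ 2 -
    (((16 / 3) * Real.sin θ - (224 / 27) * Real.sin θ ^ 3) * Real.cos θ ^ ((17 : ℝ) / 3) * Φ
      + ((208 / 81) * Real.sin θ ^ 2 - 10 / 9) * Real.cos θ ^ ((34 : ℝ) / 9) * W
      + (2 / 3) * Real.sin θ * Real.cos θ ^ ((17 : ℝ) / 9) * Ψ)

/-- `(Φ, W, Ψ, θ)` is a solution of system (D) on all of `ℝ`. -/
noncomputable def SolD (a : ℝ) (Φ W Ψ θ : ℝ → ℝ) : Prop :=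
  ∀ τ : ℝ,
    HasDerivAt Φ (W τ) τ ∧
    HasDerivAt W (Ψ τ) τ ∧
    HasDerivAt Ψ (dPsi a (Φ τ) (W τ) (Ψ τ) (θ τ)) τ ∧
    HasDerivAt θ (Real.cos (θ τ) ^ ((26 : ℝ) / 9)) τ


/-- third-order vector field -/
def V3 (N : ℝ → ℝ → ℝ) (t : ℝ) (z : ℝ × ℝ × ℝ) : ℝ × ℝ × ℝ := (z.2.1, z.2.2, N t z.1)

lemma ode_local (N : ℝ → ℝ → ℝ) (hc : Continuous (Function.uncurry N)) (T : ℝ) (hT : 0 < T)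
    (K M : ℝ) (hK : 0 ≤ K) (hM : 0 ≤ M)
    (hl : ∀ t ∈ Set.Icc (-T) T, ∀ p q, |N t p - N t q| ≤ K * |p - q|)
    (hb : ∀ t ∈ Set.Icc (-T) T, ∀ p, |N t p| ≤ M) (t0 : ℝ) (ht0 : t0 ∈ Set.Icc (-T) T)
    (R : ℝ) (hR : 0 < R) :
    ∃ α : (ℝ × ℝ × ℝ) → ℝ → (ℝ × ℝ × ℝ), (∀ z ∈ Metric.closedBall (0 : ℝ × ℝ × ℝ) R,
      α z t0 = z ∧ ∀ t ∈ Set.Icc (-T) T,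
        HasDerivWithinAt (α z) (V3 N t (α z t)) (Set.Icc (-T) T) t) ∧
      ∀ t ∈ Set.Icc (-T) T, ContinuousOn (fun z => α z t) (Metric.closedBall 0 R) := by
  set E : ℝ := 4 * T + 1 with hE
  have hE1 : 1 ≤ E := by linarith
  have hE0 : 0 < E := by linarith
  set r : ℝ := E ^ 2 * R with hr
  have hr0 : 0 < r := by positivity
  set A : ℝ := 2 * r + 2 * T * (E ^ 2 * M) with hA
  have hA0 : 0 < A := by positivity
  set L : ℝ := A / E + E ^ 2 * M with hL
  have hL0 : 0 ≤ L := by positivity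
  set K' : ℝ := 1 + E ^ 2 * K with hK'
  have hK0 : 0 ≤ K' := by positivity
  have hEi : 1 / E ≤ 1 := by rw [div_le_one hE0]; exact hE1
  let Vs : ℝ → (ℝ × ℝ × ℝ) → (ℝ × ℝ × ℝ) := fun t z => (z.2.1 / E, z.2.2 / E, E ^ 2 * N t z.1)
  have pl : IsPicardLindelof Vs (tmin := -T) (tmax := T) ⟨t0, ht0⟩ (0 : ℝ × ℝ × ℝ)
      ⟨2 * A, by positivity⟩ ⟨r, hr0.le⟩ ⟨2 * (A / E) + E ^ 2 * M, by positivity⟩ ⟨K', hK0⟩ := by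
    constructor
    · intro t ht
      apply LipschitzWith.lipschitzOnWith
      apply LipschitzWith.of_dist_le_mul
      intro x y
      have h1 : |x.1 - y.1| ≤ dist x y := by
        rw [← Real.dist_eq]; exact le_max_left _ _
      have h2' : dist x.2 y.2 ≤ dist x y := le_max_right _ _
      have h2 : |x.2.1 - y.2.1| ≤ dist x y := by
        rw [← Real.dist_eq]; exact (le_max_left _ _).trans h2'
      have h3 : |x.2.2 - y.2.2| ≤ dist x y := by
        rw [← Real.dist_eq]; exact (le_max_right _ _).trans h2'
      have hd : 0 ≤ dist x y := dist_nonneg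
      have key : dist x y ≤ K' * dist x y := by
        have : 0 ≤ E ^ 2 * K * dist x y := by positivity
        rw [hK']; linarith
      have hdiv : ∀ p q : ℝ, |p - q| ≤ dist x y → |p / E - q / E| ≤ K' * dist x y := by
        intro p q h
        rw [← sub_div, abs_div, abs_of_pos hE0]
        refine le_trans ?_ (h.trans key)
        exact div_le_self (abs_nonneg _) hE1
      change dist (Vs t x) (Vs t y) ≤ K' * dist x y
      rw [Prod.dist_eq, Prod.dist_eq]
      refine max_le ?_ (max_le ?_ ?_)
      · rw [Real.dist_eq]; exact hdiv _ _ h2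
      · rw [Real.dist_eq]; exact hdiv _ _ h3
      · rw [Real.dist_eq]
        change |E ^ 2 * N t x.1 - E ^ 2 * N t y.1| ≤ _
        rw [← mul_sub, abs_mul, abs_of_pos (by positivity : 0 < E ^ 2)]
        have := hl t ht x.1 y.1
        have h4 : K * |x.1 - y.1| ≤ K * dist x y := by gcongr
        calc E ^ 2 * |N t x.1 - N t y.1| ≤ E ^ 2 * (K * dist x y) := by gcongr; linarith
          _ ≤ K' * dist x y := by rw [hK']; nlinarith
    · intro x hx
      apply Continuous.continuousOn
      have : Continuous (fun t => N t x.1) := hc.comp (by fun_prop : Continuous fun t : ℝ => (t, x.1))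
      fun_prop
    · intro t ht x hx
      have hx' : ‖x‖ ≤ 2 * A := mem_closedBall_zero_iff.1 hx
      have h2' : ‖x.2‖ ≤ 2 * A := (le_max_right _ _).trans hx'
      have h2 : ‖x.2.1‖ ≤ 2 * A := (le_max_left _ _).trans h2'
      have h3 : ‖x.2.2‖ ≤ 2 * A := (le_max_right _ _).trans h2'
      have hdiv : ∀ p : ℝ, ‖p‖ ≤ 2 * A → ‖p / E‖ ≤ 2 * (A / E) + E ^ 2 * M := by
        intro p hp
        rw [norm_div, Real.norm_eq_abs E, abs_of_pos hE0]
        have : ‖p‖ / E ≤ 2 * A / E := by gcongr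
        have h5 : 0 ≤ E ^ 2 * M := by positivity
        have h6 : 2 * A / E = 2 * (A / E) := by ring
        linarith
      change ‖Vs t x‖ ≤ 2 * (A / E) + E ^ 2 * M
      refine max_le (hdiv _ h2) (max_le (hdiv _ h3) ?_)
      change ‖E ^ 2 * N t x.1‖ ≤ _
      rw [norm_mul, Real.norm_eq_abs (N t x.1), Real.norm_eq_abs, abs_of_pos (by positivity : 0 < E ^ 2)]
      have := hb t ht x.1
      have h7 : E ^ 2 * |N t x.1| ≤ E ^ 2 * M := by gcongr
      have h8 : 0 ≤ A / E := by positivity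
      linarith
    · change (2 * (A / E) + E ^ 2 * M) * max (T - t0) (t0 - -T) ≤ 2 * A - r
      have hm : max (T - t0) (t0 - -T) ≤ 2 * T := by
        apply max_le <;> linarith [ht0.1, ht0.2]
      have h9 : A / E * (4 * T) ≤ A := by
        rw [div_mul_eq_mul_div, div_le_iff₀ hE0]; nlinarith
      calc (2 * (A / E) + E ^ 2 * M) * max (T - t0) (t0 - -T)
          ≤ (2 * (A / E) + E ^ 2 * M) * (2 * T) := by gcongr
        _ ≤ 2 * A - r := by nlinarith
  obtain ⟨β, hβ, L', hβ2⟩ :=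
    pl.exists_forall_mem_closedBall_eq_hasDerivWithinAt_lipschitzOnWith
  have hsc : ∀ z ∈ Metric.closedBall (0 : ℝ × ℝ × ℝ) R,
      ((z.1, E * z.2.1, E ^ 2 * z.2.2) : ℝ × ℝ × ℝ) ∈ Metric.closedBall (0 : ℝ × ℝ × ℝ) r := by
    intro z hz
    have hx' : ‖z‖ ≤ R := by simpa using hz
    have h1 : ‖z.1‖ ≤ R := (le_max_left _ _).trans hx'
    have h2' : ‖z.2‖ ≤ R := (le_max_right _ _).trans hx'
    have h2 : ‖z.2.1‖ ≤ R := (le_max_left _ _).trans h2'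
    have h3 : ‖z.2.2‖ ≤ R := (le_max_right _ _).trans h2'
    rw [mem_closedBall_zero_iff]
    have hE2 : E ≤ E ^ 2 := by nlinarith
    refine max_le ?_ (max_le ?_ ?_)
    · change ‖z.1‖ ≤ r
      rw [hr]; nlinarith
    · change ‖E * z.2.1‖ ≤ r
      rw [norm_mul, Real.norm_eq_abs E, abs_of_pos hE0, hr]
      have := norm_nonneg z.2.1
      nlinarith
    · change ‖E ^ 2 * z.2.2‖ ≤ r
      rw [norm_mul, Real.norm_eq_abs (E ^ 2), abs_of_pos (by positivity), hr]
      gcongr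
  refine ⟨fun z t => ((β (z.1, E * z.2.1, E ^ 2 * z.2.2) t).1,
    (β (z.1, E * z.2.1, E ^ 2 * z.2.2) t).2.1 / E,
    (β (z.1, E * z.2.1, E ^ 2 * z.2.2) t).2.2 / E ^ 2), ?_, ?_⟩
  · intro z hz
    obtain ⟨h0, h1⟩ := hβ _ (hsc z hz)
    refine ⟨?_, ?_⟩
    · have h0' : β (z.1, E * z.2.1, E ^ 2 * z.2.2) t0 = (z.1, E * z.2.1, E ^ 2 * z.2.2) := h0
      simp only [h0']
      ext
      · rfl
      · simp; field_simp
      · simp; field_simp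
    · intro t ht
      have h2 := h1 t ht
      have ha := (hasFDerivAt_fst (𝕜 := ℝ) (p := β (z.1, E * z.2.1, E ^ 2 * z.2.2) t)).comp_hasDerivWithinAt t h2
      have hs := (hasFDerivAt_snd (𝕜 := ℝ) (p := β (z.1, E * z.2.1, E ^ 2 * z.2.2) t)).comp_hasDerivWithinAt t h2
      have hb' := (hasFDerivAt_fst (𝕜 := ℝ) (p := (β (z.1, E * z.2.1, E ^ 2 * z.2.2) t).2)).comp_hasDerivWithinAt t hs
      have hc' := (hasFDerivAt_snd (𝕜 := ℝ) (p := (β (z.1, E * z.2.1, E ^ 2 * z.2.2) t).2)).comp_hasDerivWithinAt t hs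
      have := ha.prodMk ((hb'.div_const E).prodMk (hc'.div_const (E ^ 2)))
      refine this.congr_deriv ?_
      simp only [V3, Vs]
      ext
      · simp
      · simp; field_simp
      · simp; field_simp
  · intro t ht
    have h1 : ContinuousOn (fun z : ℝ × ℝ × ℝ => β (z.1, E * z.2.1, E ^ 2 * z.2.2) t)
        (Metric.closedBall 0 R) := by
      have := (hβ2 t ht).continuousOn
      refine ContinuousOn.comp (g := fun z => β z t) this (f := fun z : ℝ × ℝ × ℝ => ((z.1, E * z.2.1, E ^ 2 * z.2.2) : ℝ × ℝ × ℝ)) (by fun_prop) ?_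
      intro z hz
      exact hsc z hz
    have h2 := continuous_snd.comp_continuousOn h1
    exact (continuous_fst.comp_continuousOn h1).prodMk
      (((continuous_fst.comp_continuousOn h2).div_const E).prodMk
        ((continuous_snd.comp_continuousOn h2).div_const (E ^ 2)))

lemma ode_unique (N : ℝ → ℝ → ℝ) (T : ℝ)
    (K : ℝ) (hK : 0 ≤ K)
    (hl : ∀ t ∈ Set.Icc (-T) T, ∀ p q, |N t p - N t q| ≤ K * |p - q|)
    (t0 : ℝ) (ht0 : t0 ∈ Set.Ioo (-T) T) (f g : ℝ → ℝ × ℝ × ℝ)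
    (hf : ∀ t ∈ Set.Ioo (-T) T, HasDerivAt f (V3 N t (f t)) t)
    (hg : ∀ t ∈ Set.Ioo (-T) T, HasDerivAt g (V3 N t (g t)) t) (h : f t0 = g t0) :
    Set.EqOn f g (Set.Ioo (-T) T) := by
  refine ODE_solution_unique_of_mem_Ioo (v := V3 N) (s := fun _ => Set.univ) (K := ⟨1 + K, by positivity⟩)
    ?_ ht0 (fun t ht => ⟨hf t ht, trivial⟩) (fun t ht => ⟨hg t ht, trivial⟩) h
  intro t ht
  apply LipschitzWith.lipschitzOnWith
  apply LipschitzWith.of_dist_le_mul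
  intro x y
  have h1 : |x.1 - y.1| ≤ dist x y := by
    rw [← Real.dist_eq]; exact le_max_left _ _
  have h2' : dist x.2 y.2 ≤ dist x y := le_max_right _ _
  have h2 : |x.2.1 - y.2.1| ≤ dist x y := by
    rw [← Real.dist_eq]; exact (le_max_left _ _).trans h2'
  have h3 : |x.2.2 - y.2.2| ≤ dist x y := by
    rw [← Real.dist_eq]; exact (le_max_right _ _).trans h2'
  have hd : 0 ≤ dist x y := dist_nonneg
  have hKd : 0 ≤ K * dist x y := by positivity
  change dist (V3 N t x) (V3 N t y) ≤ (1 + K) * dist x y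
  rw [Prod.dist_eq, Prod.dist_eq]
  refine max_le ?_ (max_le ?_ ?_) <;> rw [Real.dist_eq]
  · change |x.2.1 - y.2.1| ≤ _; linarith
  · change |x.2.2 - y.2.2| ≤ _; linarith
  · have := hl t (Set.Ioo_subset_Icc_self ht) x.1 y.1
    have h4 : K * |x.1 - y.1| ≤ K * dist x y := by gcongr
    change |N t x.1 - N t y.1| ≤ _
    linarith

lemma ode_flow (N : ℝ → ℝ → ℝ) (hc : Continuous (Function.uncurry N))
    (hl : ∀ T, 0 < T → ∃ K, 0 ≤ K ∧ ∀ t ∈ Set.Icc (-T) T, ∀ p q, |N t p - N t q| ≤ K * |p - q|)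
    (hb : ∀ T, 0 < T → ∃ M, 0 ≤ M ∧ ∀ t ∈ Set.Icc (-T) T, ∀ p, |N t p| ≤ M) (t0 : ℝ) :
    ∃ S : (ℝ × ℝ × ℝ) → ℝ → (ℝ × ℝ × ℝ),
      (∀ z, S z t0 = z ∧ ∀ t, HasDerivAt (S z) (V3 N t (S z t)) t) ∧
      ∀ t, Continuous (fun z => S z t) := by
  have hTn : ∀ n : ℕ, 0 < (n : ℝ) + |t0| + 1 := fun n => by positivity
  have hmem : ∀ n : ℕ, t0 ∈ Set.Ioo (-((n : ℝ) + |t0| + 1)) ((n : ℝ) + |t0| + 1) := by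
    intro n
    have : (0 : ℝ) ≤ n := Nat.cast_nonneg n
    constructor <;> cases abs_cases t0 <;> linarith
  have hex : ∀ n : ℕ, ∃ α : (ℝ × ℝ × ℝ) → ℝ → (ℝ × ℝ × ℝ),
      (∀ z ∈ Metric.closedBall (0 : ℝ × ℝ × ℝ) ((n : ℝ) + |t0| + 1),
      α z t0 = z ∧ ∀ t ∈ Set.Ioo (-((n : ℝ) + |t0| + 1)) ((n : ℝ) + |t0| + 1),
        HasDerivAt (α z) (V3 N t (α z t)) t) ∧
      ∀ t ∈ Set.Ioo (-((n : ℝ) + |t0| + 1)) ((n : ℝ) + |t0| + 1),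
        ContinuousOn (fun z => α z t) (Metric.closedBall 0 ((n : ℝ) + |t0| + 1)) := by
    intro n
    obtain ⟨K, hK, hl'⟩ := hl _ (hTn n)
    obtain ⟨M, hM, hb'⟩ := hb _ (hTn n)
    obtain ⟨α, h1, h2⟩ := ode_local N hc _ (hTn n) K M hK hM hl' hb' t0
      (Set.Ioo_subset_Icc_self (hmem n)) _ (hTn n)
    refine ⟨α, fun z hz => ⟨(h1 z hz).1, fun t ht => ?_⟩, fun t ht => h2 t (Set.Ioo_subset_Icc_self ht)⟩
    exact ((h1 z hz).2 t (Set.Ioo_subset_Icc_self ht)).hasDerivAt (Icc_mem_nhds ht.1 ht.2)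
  choose α hα hαc using hex
  have hagree : ∀ m n : ℕ, m ≤ n → ∀ z ∈ Metric.closedBall (0 : ℝ × ℝ × ℝ) ((m : ℝ) + |t0| + 1),
      ∀ t ∈ Set.Ioo (-((m : ℝ) + |t0| + 1)) ((m : ℝ) + |t0| + 1), α m z t = α n z t := by
    intro m n hmn z hz
    have hmn' : (m : ℝ) ≤ n := by exact_mod_cast hmn
    have hz' : z ∈ Metric.closedBall (0 : ℝ × ℝ × ℝ) ((n : ℝ) + |t0| + 1) :=
      Metric.closedBall_subset_closedBall (by linarith) hz
    obtain ⟨K, hK, hl'⟩ := hl _ (hTn m)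
    refine ode_unique N _ K hK hl' t0 (hmem m) _ _ (hα m z hz).2 ?_ ?_
    · intro t ht
      exact (hα n z hz').2 t ⟨by linarith [ht.1], by linarith [ht.2]⟩
    · rw [(hα m z hz).1, (hα n z hz').1]
  let ν : (ℝ × ℝ × ℝ) → ℝ → ℕ := fun z t => ⌈‖z‖ + |t|⌉₊
  have hν : ∀ z t, ‖z‖ + |t| ≤ ν z t := fun z t => Nat.le_ceil _
  have hS : ∀ n : ℕ, ∀ z t, ‖z‖ + |t| ≤ n → α (ν z t) z t = α n z t := by
    intro n z t h
    apply hagree _ _ (Nat.ceil_le.2 h)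
    · rw [mem_closedBall_zero_iff]
      have := hν z t
      have := abs_nonneg t
      have := abs_nonneg t0
      linarith
    · have := hν z t
      have := abs_nonneg t0
      have := norm_nonneg z
      constructor <;> cases abs_cases t <;> linarith
  refine ⟨fun z t => α (ν z t) z t, ?_, ?_⟩
  · intro z
    constructor
    · refine (hα _ z ?_).1
      rw [mem_closedBall_zero_iff]
      have := hν z t0
      have := abs_nonneg t0
      linarith
    · intro t
      obtain ⟨n, hn⟩ := exists_nat_ge (‖z‖ + |t| + 1)
      have h0 := abs_nonneg t0
      have h1 := norm_nonneg z
      have h2 := abs_nonneg t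
      have hz : z ∈ Metric.closedBall (0 : ℝ × ℝ × ℝ) ((n : ℝ) + |t0| + 1) := by
        rw [mem_closedBall_zero_iff]; linarith
      have hd := (hα n z hz).2 t (by constructor <;> cases abs_cases t <;> linarith)
      have he : (fun s => α (ν z s) z s) =ᶠ[nhds t] α n z := by
        have : ∀ᶠ s in nhds t, |s| < |t| + 1 :=
          continuous_abs.continuousAt.eventually_lt continuousAt_const (by simp)
        filter_upwards [this] with s hs
        exact hS n z s (by linarith)
      have : V3 N t (α (ν z t) z t) = V3 N t (α n z t) := by rw [hS n z t (by linarith)]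
      rw [this]
      exact hd.congr_of_eventuallyEq he
  · intro t
    rw [continuous_iff_continuousAt]
    intro z
    obtain ⟨n, hn⟩ := exists_nat_ge (‖z‖ + |t| + 1)
    have h0 := abs_nonneg t0
    have h1 := norm_nonneg z
    have h2 := abs_nonneg t
    have hev : ∀ᶠ y in nhds z, ‖y‖ < ‖z‖ + 1 :=
      continuous_norm.continuousAt.eventually_lt continuousAt_const (by simp)
    have hcz : ContinuousAt (fun y => α n y t) z := by
      refine (hαc n t (by constructor <;> cases abs_cases t <;> linarith)).continuousAt ?_
      filter_upwards [hev] with y hy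
      rw [mem_closedBall_zero_iff]; linarith
    refine hcz.congr ?_
    filter_upwards [hev] with y hy
    exact (hS n y t (by linarith)).symm


/-- `(1+x^2)^(-1/9)` -/
noncomputable def Yf (x : ℝ) : ℝ := (1 + x ^ 2) ^ (-(1 / 9) : ℝ)

lemma Yf_pos (x : ℝ) : 0 < Yf x := by unfold Yf; positivity

lemma Yf_pow9 (x : ℝ) : Yf x ^ 9 * (1 + x ^ 2) = 1 := by
  unfold Yf
  have h : 0 < 1 + x ^ 2 := by positivity
  rw [← Real.rpow_natCast, ← Real.rpow_mul h.le]
  norm_num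
  rw [Real.rpow_neg_one]
  field_simp

lemma Yf_le_one (x : ℝ) : Yf x ≤ 1 := by
  unfold Yf
  apply Real.rpow_le_one_of_one_le_of_nonpos <;> nlinarith [sq_nonneg x]

lemma Yf_hasDerivAt (x : ℝ) : HasDerivAt Yf (-(2 / 9) * x * Yf x ^ 10) x := by
  have h : 0 < 1 + x ^ 2 := by positivity
  have h1 : HasDerivAt (fun x : ℝ => 1 + x ^ 2) (2 * x) x := by
    simpa using (hasDerivAt_pow 2 x).const_add 1
  have h2 := h1.rpow_const (p := (-(1 / 9) : ℝ)) (Or.inl h.ne')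
  refine h2.congr_deriv ?_
  have : (1 + x ^ 2) ^ (-(1 / 9) - 1 : ℝ) = Yf x ^ 10 := by
    unfold Yf
    rw [← Real.rpow_natCast (_ ^ _) 10, ← Real.rpow_mul h.le]
    norm_num
  rw [this]; ring

lemma Yf_continuous : Continuous Yf :=
  continuous_iff_continuousAt.2 fun x => (Yf_hasDerivAt x).continuousAt

lemma Yf_x1 (x : ℝ) : |x| * Yf x ^ 9 ≤ 1 := by
  have h := Yf_pow9 x
  have h0 : 0 < Yf x ^ 9 := pow_pos (Yf_pos x) 9
  have : |x| ≤ 1 + x ^ 2 := by rw [← sq_abs]; nlinarith [sq_nonneg (|x| - 1)]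
  calc |x| * Yf x ^ 9 ≤ (1 + x ^ 2) * Yf x ^ 9 := by gcongr
    _ = 1 := by linarith

lemma Yf_x2 (x : ℝ) : x ^ 2 * Yf x ^ 9 ≤ 1 := by
  have h := Yf_pow9 x
  have h0 : 0 < Yf x ^ 9 := pow_pos (Yf_pos x) 9
  nlinarith

/-- comparison functions -/
structure Cmp (a : ℝ) (h0 h1 h2 h3 : ℝ → ℝ) (A : ℝ) : Prop where
  A1 : 1 ≤ A
  d0 : ∀ x, HasDerivAt h0 (h1 x) x
  d1 : ∀ x, HasDerivAt h1 (h2 x) x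
  d2 : ∀ x, HasDerivAt h2 (h3 x) x
  c3 : Continuous h3
  lo : ∀ x, Yf x ^ 3 ≤ h0 x
  hi : ∀ x, h0 x ≤ Yf x ^ 3 * (1 + A * Yf x ^ 9)
  Flo : ∀ x, (1 + x ^ 2) / 2 ≤ x ^ 2 + a + h3 x
  Fnear : ∀ x, |x ^ 2 + a + h3 x - (1 + x ^ 2)| ≤ A
  b1 : ∀ x, |h1 x| ≤ A
  b2 : ∀ x, |h2 x| ≤ A

lemma Y3_d0 (x : ℝ) : HasDerivAt (fun x => Yf x ^ 3) (-(2 / 3) * x * Yf x ^ 12) x := by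
  refine ((Yf_hasDerivAt x).pow 3).congr_deriv ?_
  norm_num; ring

lemma Y3_d1 (x : ℝ) : HasDerivAt (fun x => -(2 / 3) * x * Yf x ^ 12)
    (-(2 / 3) * Yf x ^ 12 + (16 / 9) * x ^ 2 * Yf x ^ 21) x := by
  refine (((hasDerivAt_id x).const_mul (-(2 / 3))).mul ((Yf_hasDerivAt x).pow 12)).congr_deriv ?_
  norm_num; ring

lemma Y3_d2 (x : ℝ) : HasDerivAt
    (fun x => -(2 / 3) * Yf x ^ 12 + (16 / 9) * x ^ 2 * Yf x ^ 21)
    ((16 / 3) * x * Yf x ^ 21 - (224 / 27) * x ^ 3 * Yf x ^ 30) x := by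
  refine ((((Yf_hasDerivAt x).pow 12).const_mul (-(2 / 3))).add
    ((((hasDerivAt_id x).pow 2).const_mul (16 / 9)).mul ((Yf_hasDerivAt x).pow 21))).congr_deriv ?_
  norm_num; ring

lemma Y3_b1 (x : ℝ) : |-(2 / 3) * x * Yf x ^ 12| ≤ 1 := by
  have h := Yf_x1 x
  have hp := Yf_pos x
  have h1 := pow_le_one₀ hp.le (Yf_le_one x) (n := 3)
  rw [abs_mul, abs_mul, abs_of_pos (pow_pos hp 12)]
  norm_num
  have : 0 ≤ |x| * Yf x ^ 9 := by positivity
  calc 2 / 3 * |x| * Yf x ^ 12 = 2 / 3 * ((|x| * Yf x ^ 9) * Yf x ^ 3) := by ring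
    _ ≤ 2 / 3 * (1 * 1) := by gcongr
    _ ≤ 1 := by norm_num

lemma Y3_b2 (x : ℝ) : |-(2 / 3) * Yf x ^ 12 + (16 / 9) * x ^ 2 * Yf x ^ 21| ≤ 3 := by
  have h := Yf_x2 x
  have hp := Yf_pos x
  have h1 := pow_le_one₀ hp.le (Yf_le_one x) (n := 12)
  have h2 : x ^ 2 * Yf x ^ 21 ≤ 1 := by
    calc x ^ 2 * Yf x ^ 21 = (x ^ 2 * Yf x ^ 9) * Yf x ^ 12 := by ring
      _ ≤ 1 * 1 := by gcongr
      _ = 1 := by norm_num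
  have h3 : 0 ≤ x ^ 2 * Yf x ^ 21 := by positivity
  have h4 : 0 ≤ Yf x ^ 12 := by positivity
  rw [abs_le]; constructor <;> nlinarith

lemma Y3_b3 (x : ℝ) : |(16 / 3) * x * Yf x ^ 21 - (224 / 27) * x ^ 3 * Yf x ^ 30| ≤ 14 := by
  have h := Yf_x2 x
  have h' := Yf_x1 x
  have hp := Yf_pos x
  have h1 := pow_le_one₀ hp.le (Yf_le_one x) (n := 12)
  have e1 : |(16 / 3) * x * Yf x ^ 21| ≤ 16 / 3 := by
    rw [abs_mul, abs_mul, abs_of_pos (pow_pos hp 21)]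
    norm_num
    calc 16 / 3 * |x| * Yf x ^ 21 = 16 / 3 * ((|x| * Yf x ^ 9) * Yf x ^ 12) := by ring
      _ ≤ 16 / 3 * (1 * 1) := by gcongr
      _ = _ := by norm_num
  have e2 : |(224 / 27) * x ^ 3 * Yf x ^ 30| ≤ 224 / 27 := by
    rw [abs_mul, abs_mul, abs_of_pos (pow_pos hp 30), abs_pow]
    norm_num
    calc 224 / 27 * |x| ^ 3 * Yf x ^ 30
        = 224 / 27 * ((|x| * Yf x ^ 9) * (|x| ^ 2 * Yf x ^ 9) * Yf x ^ 12) := by ring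
      _ ≤ 224 / 27 * (1 * 1 * 1) := by rw [sq_abs]; gcongr
      _ = _ := by norm_num
  have := abs_sub ((16 / 3) * x * Yf x ^ 21) ((224 / 27) * x ^ 3 * Yf x ^ 30)
  linarith

/-- bump -/
noncomputable def pb0 (z : ℝ) : ℝ := 1 / (1 + z ^ 2) ^ 2
/-- bump -/
noncomputable def pb1 (z : ℝ) : ℝ := -4 * z / (1 + z ^ 2) ^ 3
/-- bump -/
noncomputable def pb2 (z : ℝ) : ℝ := (20 * z ^ 2 - 4) / (1 + z ^ 2) ^ 4
/-- bump -/
noncomputable def pb3 (z : ℝ) : ℝ := (72 * z - 120 * z ^ 3) / (1 + z ^ 2) ^ 5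

lemma one_add_sq_hd (z : ℝ) : HasDerivAt (fun z : ℝ => 1 + z ^ 2) (2 * z) z := by
  simpa using (hasDerivAt_pow 2 z).const_add 1

lemma pb_d0 (z : ℝ) : HasDerivAt pb0 (pb1 z) z := by
  have h : (1 + z ^ 2) ≠ 0 := by positivity
  refine ((hasDerivAt_const z (1 : ℝ)).div ((one_add_sq_hd z).pow 2) (pow_ne_zero _ h)).congr_deriv ?_
  unfold pb1; norm_num; field_simp; ring

lemma pb_d1 (z : ℝ) : HasDerivAt pb1 (pb2 z) z := by
  have h : (1 + z ^ 2) ≠ 0 := by positivity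
  refine (((hasDerivAt_id z).const_mul (-4)).div ((one_add_sq_hd z).pow 3) (pow_ne_zero _ h)).congr_deriv ?_
  unfold pb2; norm_num; field_simp; ring

lemma pb_d2 (z : ℝ) : HasDerivAt pb2 (pb3 z) z := by
  have h : (1 + z ^ 2) ≠ 0 := by positivity
  refine (((((hasDerivAt_id z).pow 2).const_mul 20).sub_const 4).div ((one_add_sq_hd z).pow 4)
    (pow_ne_zero _ h)).congr_deriv ?_
  unfold pb3; norm_num; field_simp; ring

lemma pb_c3 : Continuous pb3 := by
  unfold pb3
  apply Continuous.div (by fun_prop) (by fun_prop)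
  intro z; positivity

lemma pb_b1 (z : ℝ) : |pb1 z| ≤ 4 := by
  unfold pb1
  have h : 1 ≤ (1 + z ^ 2) := by nlinarith [sq_nonneg z]
  rw [abs_div, abs_of_pos (by positivity : 0 < (1 + z ^ 2) ^ 3), div_le_iff₀ (by positivity),
    abs_mul]
  norm_num
  have : |z| ≤ 1 + z ^ 2 := by rw [← sq_abs]; nlinarith [sq_nonneg (|z| - 1)]
  have h2 : 1 + z ^ 2 ≤ (1 + z ^ 2) ^ 3 := le_self_pow₀ h (by norm_num)
  linarith

lemma pb_b2 (z : ℝ) : |pb2 z| ≤ 24 := by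
  unfold pb2
  have h : 1 ≤ (1 + z ^ 2) := by nlinarith [sq_nonneg z]
  rw [abs_div, abs_of_pos (by positivity : 0 < (1 + z ^ 2) ^ 4), div_le_iff₀ (by positivity)]
  have h2 : 1 + z ^ 2 ≤ (1 + z ^ 2) ^ 4 := le_self_pow₀ h (by norm_num)
  rw [abs_le]; constructor <;> nlinarith

lemma pb_b3 (z : ℝ) : |pb3 z| ≤ 192 := by
  unfold pb3
  have h : 1 ≤ (1 + z ^ 2) := by nlinarith [sq_nonneg z]
  rw [abs_div, abs_of_pos (by positivity : 0 < (1 + z ^ 2) ^ 5), div_le_iff₀ (by positivity)]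
  have h2 : (1 + z ^ 2) ^ 2 ≤ (1 + z ^ 2) ^ 5 := pow_le_pow_right₀ h (by norm_num)
  have h3 : |z| ≤ (1 + z ^ 2) ^ 2 := by
    rw [← sq_abs z]; nlinarith [sq_nonneg (|z| - 1), abs_nonneg z, sq_nonneg (|z|^2)]
  have h4 : |z| ^ 3 ≤ (1 + z ^ 2) ^ 2 := by
    rw [← sq_abs z]; nlinarith [sq_nonneg (|z| - 1), abs_nonneg z, sq_nonneg (|z|^2 - |z|), sq_nonneg (|z|)]
  calc |72 * z - 120 * z ^ 3| ≤ |72 * z| + |120 * z ^ 3| := abs_sub _ _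
    _ = 72 * |z| + 120 * |z| ^ 3 := by rw [abs_mul, abs_mul, abs_pow]; norm_num
    _ ≤ 192 * (1 + z ^ 2) ^ 5 := by linarith

lemma pb_mid (z : ℝ) (h1 : -(5 / 2) ≤ z) (h2 : z ≤ -(3 / 2)) : 1 / 100 ≤ pb3 z := by
  unfold pb3
  rw [le_div_iff₀ (by positivity)]
  have h3 : 9 / 4 ≤ z ^ 2 := by nlinarith
  have h4 : z ^ 2 ≤ 25 / 4 := by nlinarith
  have h5 : (1 + z ^ 2) ^ 5 ≤ (29 / 4) ^ 5 := by gcongr; linarith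
  have h6 : 297 ≤ 72 * z - 120 * z ^ 3 := by nlinarith
  norm_num at h5
  linarith

lemma cmp_exists (a : ℝ) : ∃ h0 h1 h2 h3 : ℝ → ℝ, ∃ A : ℝ, Cmp a h0 h1 h2 h3 A := by
  set B : ℝ := |a| + 16 with hB
  have hB1 : 16 ≤ B := by have := abs_nonneg a; linarith
  set L : ℝ := 160000 * B with hL
  have hL0 : 1 ≤ L := by nlinarith
  have hLp : 0 < L := by linarith
  set lam : ℝ := 100 * B * L ^ 3 with hlam
  have hlam0 : 0 < lam := by positivity
  have hz : ∀ x : ℝ, HasDerivAt (fun x : ℝ => x / L - 2) (1 / L) x := fun x =>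
    ((hasDerivAt_id x).div_const L).sub_const 2
  set C : ℝ := (1 + 8 * L ^ 2) ^ 2 with hC
  have hC0 : 0 < C := by positivity
  set A : ℝ := 1 + lam * C + (|a| + 1 + 14 + 19200 * B) + (1 + 4 * lam) + (3 + 24 * lam) with hA
  have hlC : 0 < lam * C := by positivity
  have ha := abs_nonneg a
  have hcoef : lam / L ^ 3 = 100 * B := by rw [hlam]; field_simp
  have hb3 : ∀ x : ℝ, |lam / L ^ 3 * pb3 (x / L - 2)| ≤ 19200 * B := by
    intro x
    rw [hcoef, abs_mul, abs_of_pos (by positivity)]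
    nlinarith [pb_b3 (x / L - 2)]
  refine ⟨fun x => Yf x ^ 3 + lam * pb0 (x / L - 2),
    fun x => -(2 / 3) * x * Yf x ^ 12 + lam / L * pb1 (x / L - 2),
    fun x => (-(2 / 3) * Yf x ^ 12 + (16 / 9) * x ^ 2 * Yf x ^ 21) + lam / L ^ 2 * pb2 (x / L - 2),
    fun x => ((16 / 3) * x * Yf x ^ 21 - (224 / 27) * x ^ 3 * Yf x ^ 30)
      + lam / L ^ 3 * pb3 (x / L - 2), A, ?_⟩
  constructor
  · rw [hA]; linarith
  · intro x
    refine ((Y3_d0 x).add (((pb_d0 (x / L - 2)).comp x (hz x)).const_mul lam)).congr_deriv ?_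
    ring
  · intro x
    refine ((Y3_d1 x).add (((pb_d1 (x / L - 2)).comp x (hz x)).const_mul (lam / L))).congr_deriv ?_
    field_simp
  · intro x
    refine ((Y3_d2 x).add (((pb_d2 (x / L - 2)).comp x (hz x)).const_mul (lam / L ^ 2))).congr_deriv ?_
    field_simp
  · have := Yf_continuous
    have := pb_c3
    fun_prop
  · intro x
    have : 0 < pb0 (x / L - 2) := by unfold pb0; positivity
    have : 0 < lam * pb0 (x / L - 2) := by positivity
    linarith
  · intro x
    have hp := Yf_pos x
    have h1 := Yf_le_one x
    have h9 := Yf_pow9 x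
    have key : pb0 (x / L - 2) ≤ C * Yf x ^ 18 := by
      unfold pb0
      rw [div_le_iff₀ (by positivity)]
      have hX : 1 + x ^ 2 ≤ (1 + 8 * L ^ 2) * (1 + (x / L - 2) ^ 2) := by
        set z := x / L - 2 with hz
        have hx : x = L * (z + 2) := by rw [hz]; field_simp; ring
        rw [hx]
        nlinarith [sq_nonneg (z - 2), sq_nonneg z, mul_nonneg (sq_nonneg L) (sq_nonneg (z - 2)), mul_nonneg (sq_nonneg L) (sq_nonneg z)]
      have hX2 : (1 + x ^ 2) ^ 2 ≤ C * (1 + (x / L - 2) ^ 2) ^ 2 := by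
        rw [hC, ← mul_pow]; gcongr
      calc (1 : ℝ) = Yf x ^ 18 * (1 + x ^ 2) ^ 2 := by
            rw [show Yf x ^ 18 * (1 + x ^ 2) ^ 2 = (Yf x ^ 9 * (1 + x ^ 2)) ^ 2 by ring, h9]; norm_num
        _ ≤ Yf x ^ 18 * (C * (1 + (x / L - 2) ^ 2) ^ 2) := by gcongr
        _ = _ := by ring
    have e1 : Yf x ^ 18 ≤ Yf x ^ 12 := pow_le_pow_of_le_one hp.le h1 (by norm_num)
    have e2 : lam * C ≤ A := by rw [hA]; linarith
    calc Yf x ^ 3 + lam * pb0 (x / L - 2) ≤ Yf x ^ 3 + lam * (C * Yf x ^ 12) := by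
          gcongr; exact key.trans (by gcongr)
      _ = Yf x ^ 3 + lam * C * Yf x ^ 12 := by ring
      _ ≤ Yf x ^ 3 + A * Yf x ^ 12 := by gcongr
      _ = _ := by ring
  · intro x
    have h1 := abs_le.1 (Y3_b3 x)
    have h2 := neg_abs_le a
    by_cases hx : |x| ≤ L / 2
    · have hx' := abs_le.1 hx
      have hm := pb_mid (x / L - 2)
        (by have : -(1 / 2) ≤ x / L := by rw [le_div_iff₀ hLp]; linarith
            linarith)
        (by have : x / L ≤ 1 / 2 := by rw [div_le_iff₀ hLp]; linarith
            linarith)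
      rw [hcoef]
      nlinarith [sq_nonneg x]
    · push Not at hx
      have h3 := abs_le.1 (hb3 x)
      have h4 : L ^ 2 / 4 ≤ x ^ 2 := by
        rw [← sq_abs x]; nlinarith
      have h5 : 160000 * B ≤ L ^ 2 := by nlinarith
      have h6 : 160000 * 16 * B ≤ L ^ 2 := by nlinarith
      linarith [h1.1, h3.1]
  · intro x
    have h1 := abs_le.1 (Y3_b3 x)
    have h2 := neg_abs_le a
    have h2' := le_abs_self a
    have h3 := abs_le.1 (hb3 x)
    rw [abs_le]; constructor <;> linarith [h1.1, h1.2, h3.1, h3.2]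
  · intro x
    have h1 := Y3_b1 x
    have h2 := pb_b1 (x / L - 2)
    have h3 : |lam / L * pb1 (x / L - 2)| ≤ 4 * lam := by
      rw [abs_mul, abs_of_pos (by positivity)]
      have : lam / L ≤ lam := div_le_self hlam0.le hL0
      have h0 : 0 < lam / L := by positivity
      nlinarith [abs_nonneg (pb1 (x / L - 2))]
    have := abs_add_le (-(2 / 3) * x * Yf x ^ 12) (lam / L * pb1 (x / L - 2))
    linarith
  · intro x
    have h1 := Y3_b2 x
    have h2 := pb_b2 (x / L - 2)
    have h3 : |lam / L ^ 2 * pb2 (x / L - 2)| ≤ 24 * lam := by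
      rw [abs_mul, abs_of_pos (by positivity)]
      have : lam / L ^ 2 ≤ lam := div_le_self hlam0.le (one_le_pow₀ hL0)
      have h0 : 0 < lam / L ^ 2 := by positivity
      nlinarith [abs_nonneg (pb2 (x / L - 2))]
    have := abs_add_le (-(2 / 3) * Yf x ^ 12 + (16 / 9) * x ^ 2 * Yf x ^ 21) (lam / L ^ 2 * pb2 (x / L - 2))
    linarith


/-- truncated nonlinearity -/
noncomputable def Gm (k s : ℝ) : ℝ := 1 / (max s k) ^ 3

lemma Gm_lo (k s : ℝ) (hk : 0 < k) (hk2 : k ≤ 1 / 2) : min |s - 1| 1 / 2 ≤ |1 - Gm k s| := by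
  unfold Gm
  rcases le_total 1 s with h | h
  · rw [max_eq_left (by linarith), abs_of_nonneg (by linarith : 0 ≤ s - 1)]
    have h0 : 0 < s := by linarith
    have h3 : 1 / s ^ 3 ≤ 1 / s := by
      apply one_div_le_one_div_of_le h0; exact le_self_pow₀ h (by norm_num)
    have h4 : min (s - 1) 1 / 2 ≤ 1 - 1 / s := by
      rw [show 1 - 1 / s = (s - 1) / s by field_simp, le_div_iff₀ h0]
      rcases le_total (s - 1) 1 with h5 | h5
      · rw [min_eq_left h5]; nlinarith
      · rw [min_eq_right h5]; nlinarith
    exact h4.trans (le_trans (by linarith) (le_abs_self _))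
  · rw [abs_of_nonpos (by linarith : s - 1 ≤ 0)]
    rw [abs_sub_comm]
    refine le_trans ?_ (le_abs_self _)
    have hm : 0 < max s k := lt_of_lt_of_le hk (le_max_right _ _)
    have hm1 : max s k ≤ 1 := max_le h (by linarith)
    have h3 : 1 / max s k ≤ 1 / (max s k) ^ 3 := by
      apply one_div_le_one_div_of_le (by positivity)
      exact pow_le_of_le_one hm.le hm1 (by norm_num)
    have h4 : min (-(s - 1)) 1 / 2 ≤ 1 / max s k - 1 := by
      rw [show 1 / max s k - 1 = (1 - max s k) / max s k by field_simp, le_div_iff₀ hm]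
      rcases le_total s k with h5 | h5
      · rw [max_eq_right h5]
        have : min (-(s - 1)) 1 ≤ 1 := min_le_right _ _
        nlinarith
      · rw [max_eq_left h5]
        have : min (-(s - 1)) 1 ≤ -(s - 1) := min_le_left _ _
        have h6 : 0 < s := by linarith
        nlinarith
    linarith

lemma Gm_sign (k s : ℝ) (hk : 0 < k) (hk2 : k ≤ 1 / 2) :
    (1 ≤ s → 0 ≤ 1 - Gm k s ∧ Gm k s = 1 / s ^ 3) ∧ (s ≤ 1 → 1 - Gm k s ≤ 0) := by
  unfold Gm
  constructor
  · intro h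
    rw [max_eq_left (by linarith)]
    refine ⟨?_, rfl⟩
    have : 1 / s ^ 3 ≤ 1 := by
      rw [div_le_one (by positivity)]; exact one_le_pow₀ h
    linarith
  · intro h
    have hm : 0 < max s k := lt_of_lt_of_le hk (le_max_right _ _)
    have hm1 : max s k ≤ 1 := max_le h (by linarith)
    have : 1 ≤ 1 / (max s k) ^ 3 := by
      rw [le_div_iff₀ (by positivity)]; rw [one_mul]; exact pow_le_one₀ hm.le hm1
    linarith

lemma coer (A k s η : ℝ) (hk : 0 < k) (hk2 : k ≤ 1 / 2) (hkA : (1 + 2 * A) * k ^ 3 < 1)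
    (h1 : |η| ≤ A) (h2 : 1 / 2 ≤ 1 + η) :
    |s - 1| * |1 - Gm k s| ≤ 4 * ((1 + η - Gm k s) * (s - 1)) + 16 * η ^ 2 := by
  have hlo := Gm_lo k s hk hk2
  have hsg := Gm_sign k s hk hk2
  rcases le_total s 1 with h | h
  · have hz := hsg.2 h
    have hy : s - 1 ≤ 0 := by linarith
    rw [abs_of_nonpos hy, abs_of_nonpos hz] at *
    by_cases hc : 2 * |η| ≤ -(1 - Gm k s)
    · have : (s - 1) * η ≥ -(-(s - 1) * |η|) := by
        nlinarith [neg_abs_le η, le_abs_self η]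
      nlinarith [sq_nonneg η]
    · push Not at hc
      have hsk : k < s := by
        by_contra hcon
        push Not at hcon
        have : Gm k s = 1 / k ^ 3 := by unfold Gm; rw [max_eq_right hcon]
        have h5 : 1 + 2 * A < 1 / k ^ 3 := by rw [lt_div_iff₀ (by positivity)]; exact hkA
        linarith
      rw [min_eq_left (by linarith)] at hlo
      have hη2 : η ^ 2 = |η| ^ 2 := (sq_abs η).symm
      have : (s - 1) * η ≥ -(-(s - 1) * |η|) := by
        nlinarith [neg_abs_le η, le_abs_self η]
      have h6 : -(s - 1) * |η| ≤ 4 * |η| * |η| := by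
        apply mul_le_mul_of_nonneg_right _ (abs_nonneg _); linarith
      have h7 : 0 ≤ (s - 1) * (1 - Gm k s) := mul_nonneg_of_nonpos_of_nonpos hy hz
      nlinarith
  · obtain ⟨hz, hG⟩ := hsg.1 h
    have hy : 0 ≤ s - 1 := by linarith
    rw [abs_of_nonneg hy, abs_of_nonneg hz] at *
    have h7 : 0 ≤ (s - 1) * (1 - Gm k s) := mul_nonneg hy hz
    rcases le_total 0 η with hη | hη
    · nlinarith [mul_nonneg hy hη, sq_nonneg η]
    · rw [abs_of_nonpos hη] at h1
      by_cases hc : 2 * (-η) ≤ 1 - Gm k s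
      · nlinarith [sq_nonneg η]
      · push Not at hc
        by_cases hs : -η ≤ 1 / 4
        · have h8 : s - 1 < 1 := by
            by_contra hcon
            push Not at hcon
            rw [min_eq_right hcon] at hlo
            linarith
          rw [min_eq_left h8.le] at hlo
          nlinarith
        · push Not at hs
          by_cases hG2 : Gm k s ≤ 1 / 4
          · have hGp : 0 < Gm k s := by rw [hG]; positivity
            have : 1 / 4 * (s - 1) ≤ (1 + η - Gm k s) * (s - 1) := by
              apply mul_le_mul_of_nonneg_right _ hy; linarith
            nlinarith [sq_nonneg η]
          · push Not at hG2
            have h8 : s < 2 := by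
              by_contra hcon
              push Not at hcon
              have : (2 : ℝ) ^ 3 ≤ s ^ 3 := by gcongr
              have h9 : 1 / s ^ 3 ≤ 1 / 2 ^ 3 := one_div_le_one_div_of_le (by norm_num) this
              rw [hG] at hG2
              norm_num at h9 hG2
              linarith
            nlinarith

lemma y_bd (k s δ P : ℝ) (hk : 0 < k) (hk2 : k ≤ 1 / 2) (hδ : 0 < δ) (hδ2 : δ ≤ 1 / 2)
    (hP : |s - 1| * |1 - Gm k s| ≤ P) :
    |s - 1| ≤ δ + 2 * P / δ ∧ |1 - Gm k s| ≤ 38 * δ + P / δ := by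
  have hP0 : 0 ≤ P := le_trans (by positivity) hP
  have hPd : 0 ≤ P / δ := by positivity
  have e2 : 2 * P / δ = 2 * (P / δ) := by ring
  have hlo := Gm_lo k s hk hk2
  by_cases h : |s - 1| < δ
  · refine ⟨by linarith, ?_⟩
    have h' := abs_lt.1 h
    have hs : 1 / 2 ≤ s := by linarith
    have : Gm k s = 1 / s ^ 3 := by unfold Gm; rw [max_eq_left (by linarith)]
    rw [this]
    have hs0 : 0 < s := by linarith
    have e : 1 - 1 / s ^ 3 = (s - 1) * ((1 + s + s ^ 2) / s ^ 3) := by field_simp; ring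
    have e3 : (1 + s + s ^ 2) / s ^ 3 ≤ 38 := by
      rw [div_le_iff₀ (by positivity)]
      have : (1 / 2 : ℝ) ^ 3 ≤ s ^ 3 := by gcongr
      nlinarith
    have e4 : 0 ≤ (1 + s + s ^ 2) / s ^ 3 := by positivity
    rw [e, abs_mul, abs_of_nonneg e4]
    nlinarith [abs_nonneg (s - 1)]
  · push Not at h
    have hm : δ ≤ min |s - 1| 1 := le_min h (by linarith)
    have hz : δ / 2 ≤ |1 - Gm k s| := by linarith
    constructor
    · rw [e2]
      have : |s - 1| ≤ 2 * (P / δ) := by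
        rw [← e2, le_div_iff₀ hδ]; nlinarith [abs_nonneg (s - 1)]
      linarith
    · have : |1 - Gm k s| ≤ P / δ := by
        rw [le_div_iff₀ hδ]; nlinarith [abs_nonneg (1 - Gm k s)]
      linarith


/-- truncated right-hand side for `u = H - h0` -/
noncomputable def Nf (a : ℝ) (h0 h3 : ℝ → ℝ) (k x u : ℝ) : ℝ :=
  1 / (max (h0 x + u) (k * h0 x)) ^ 3 - (x ^ 2 + a + h3 x)

/-- dissipation density -/
noncomputable def Ef (h0 : ℝ → ℝ) (k x u : ℝ) : ℝ :=
  |u / h0 x| * |1 - Gm k (1 + u / h0 x)| / h0 x ^ 2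

section
variable {a A : ℝ} {h0 h1 h2 h3 : ℝ → ℝ}

lemma Cmp.h0pos (c : Cmp a h0 h1 h2 h3 A) (x : ℝ) : 0 < h0 x :=
  lt_of_lt_of_le (pow_pos (Yf_pos x) 3) (c.lo x)

lemma Cmp.h0up (c : Cmp a h0 h1 h2 h3 A) (x : ℝ) : h0 x ≤ Yf x ^ 3 * (1 + A) := by
  refine (c.hi x).trans ?_
  have hA := c.A1
  have h9 : Yf x ^ 9 ≤ 1 := pow_le_one₀ (Yf_pos x).le (Yf_le_one x)
  have hy := pow_pos (Yf_pos x) 3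
  gcongr
  nlinarith

lemma Cmp.eta (c : Cmp a h0 h1 h2 h3 A) (x : ℝ) :
    |(x ^ 2 + a + h3 x) * h0 x ^ 3 - 1| ≤ (1 + A) ^ 4 * Yf x ^ 9 ∧
      1 / 2 ≤ (x ^ 2 + a + h3 x) * h0 x ^ 3 := by
  have hA := c.A1
  have hy := Yf_pos x
  have h9 : Yf x ^ 9 ≤ 1 := pow_le_one₀ (Yf_pos x).le (Yf_le_one x)
  have hX := Yf_pow9 x
  have hlo := c.lo x
  have hhi := c.hi x
  have hF := c.Flo x
  have hN := c.Fnear x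
  set F := x ^ 2 + a + h3 x with hFd
  obtain ⟨e, he⟩ : ∃ e, h0 x = Yf x ^ 3 * (1 + e) := ⟨h0 x / Yf x ^ 3 - 1, by field_simp; ring⟩
  have hy3 := pow_pos hy 3
  have he0 : 0 ≤ e := by
    rw [he] at hlo
    by_contra hcon
    push Not at hcon
    nlinarith
  have heA : e ≤ A * Yf x ^ 9 := by
    rw [he] at hhi
    have := le_of_mul_le_mul_left hhi hy3
    linarith
  have hY9 := pow_pos hy 9
  have h03 : h0 x ^ 3 = Yf x ^ 9 * (1 + e) ^ 3 := by rw [he]; ring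
  have hex : F * h0 x ^ 3 = (1 + (F - (1 + x ^ 2)) * Yf x ^ 9) * (1 + e) ^ 3 := by
    rw [h03]
    linear_combination (1 + e) ^ 3 * hX
  have he1 : e ≤ A := by nlinarith
  have hc1 : 1 ≤ (1 + e) ^ 3 := one_le_pow₀ (by linarith)
  have hc2 : (1 + e) ^ 3 ≤ (1 + A) ^ 3 := by gcongr
  refine ⟨?_, ?_⟩
  · rw [hex]
    set f := F - (1 + x ^ 2)
    have hf := abs_le.1 hN
    have hsplit : (1 + f * Yf x ^ 9) * (1 + e) ^ 3 - 1
        = f * (Yf x ^ 9 * (1 + e) ^ 3) + e * (3 + 3 * e + e ^ 2) := by ring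
    rw [hsplit]
    refine (abs_add_le _ _).trans ?_
    have t1 : |f * (Yf x ^ 9 * (1 + e) ^ 3)| ≤ A * (Yf x ^ 9 * (1 + A) ^ 3) := by
      rw [abs_mul, abs_of_pos (by positivity : 0 < Yf x ^ 9 * (1 + e) ^ 3)]
      gcongr
    have t2 : |e * (3 + 3 * e + e ^ 2)| ≤ (A * Yf x ^ 9) * (3 + 3 * A + A ^ 2) := by
      rw [abs_of_nonneg (by positivity)]
      gcongr
    nlinarith
  · rw [h03]
    calc (1:ℝ)/2 = (1 + x ^ 2) / 2 * (Yf x ^ 9 * 1) := by linarith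
      _ ≤ _ := by
        have : 0 ≤ F := le_trans (by positivity) hF
        gcongr

lemma Nf_eq (c : Cmp a h0 h1 h2 h3 A) (k x u : ℝ) :
    Nf a h0 h3 k x u = (Gm k (1 + u / h0 x) - (x ^ 2 + a + h3 x) * h0 x ^ 3) / h0 x ^ 3 := by
  have hp := c.h0pos x
  unfold Nf Gm
  have : max (h0 x + u) (k * h0 x) = h0 x * max (1 + u / h0 x) k := by
    rw [mul_max_of_nonneg _ _ hp.le]
    congr 1
    · field_simp
    · ring
  rw [this, mul_pow]
  by_cases h : max (1 + u / h0 x) k = 0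
  · rw [h]; field_simp
  · field_simp

lemma Ef_nonneg (k x u : ℝ) : 0 ≤ Ef h0 k x u := by
  unfold Ef; positivity

lemma diss (c : Cmp a h0 h1 h2 h3 A) (k x u : ℝ) (hk : 0 < k) (hk2 : k ≤ 1 / 2)
    (hkA : (1 + 2 * (1 + A) ^ 4) * k ^ 3 < 1) :
    u * Nf a h0 h3 k x u ≤ - Ef h0 k x u / 4 + 4 * ((1 + A) ^ 4) ^ 2 / (1 + x ^ 2) := by
  have hp := c.h0pos x
  obtain ⟨he, he2⟩ := c.eta x
  have hA := c.A1
  have hy := Yf_pos x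
  have h9 : Yf x ^ 9 ≤ 1 := pow_le_one₀ (Yf_pos x).le (Yf_le_one x)
  have hX := Yf_pow9 x
  have hY9 := pow_pos hy 9
  set η := (x ^ 2 + a + h3 x) * h0 x ^ 3 - 1 with hη
  have h3A : |η| ≤ (1 + A) ^ 4 := he.trans (mul_le_of_le_one_right (by positivity) h9)
  have hco := coer ((1 + A) ^ 4) k (1 + u / h0 x) η hk hk2 hkA h3A (by linarith)
  rw [Nf_eq c]
  unfold Ef
  have e1 : (x ^ 2 + a + h3 x) * h0 x ^ 3 = 1 + η := by rw [hη]; ring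
  rw [e1]
  set g := Gm k (1 + u / h0 x)
  have e2 : u * ((g - (1 + η)) / h0 x ^ 3) = - ((1 + η - g) * (1 + u / h0 x - 1)) / h0 x ^ 2 := by
    field_simp; ring
  rw [e2]
  have e3 : η ^ 2 / h0 x ^ 2 ≤ ((1 + A) ^ 4) ^ 2 / (1 + x ^ 2) := by
    have : 1 / (1 + x ^ 2) = Yf x ^ 9 := by field_simp; linarith
    rw [div_eq_mul_one_div _ (1 + x ^ 2), this, div_le_iff₀ (by positivity)]
    have l1 : η ^ 2 ≤ ((1 + A) ^ 4 * Yf x ^ 9) ^ 2 := by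
      rw [← sq_abs η]; gcongr
    have l2 : (Yf x ^ 3) ^ 2 ≤ h0 x ^ 2 := by
      have := c.lo x
      gcongr
    have l3 : Yf x ^ 9 ≤ Yf x ^ 6 := pow_le_pow_of_le_one hy.le (Yf_le_one x) (by norm_num)
    calc η ^ 2 ≤ ((1 + A) ^ 4 * Yf x ^ 9) ^ 2 := l1
      _ = ((1 + A) ^ 4) ^ 2 * Yf x ^ 9 * Yf x ^ 9 := by ring
      _ ≤ ((1 + A) ^ 4) ^ 2 * Yf x ^ 9 * h0 x ^ 2 := by
        gcongr
        calc _ ≤ _ := l3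
          _ = (Yf x ^ 3) ^ 2 := by ring
          _ ≤ _ := l2
  have e4 : 1 + u / h0 x - 1 = u / h0 x := by ring
  rw [e4] at hco ⊢
  have hq : 0 < h0 x ^ 2 := by positivity
  have := div_le_div_of_nonneg_right hco hq.le
  have e5 : (4 * ((1 + η - g) * (u / h0 x)) + 16 * η ^ 2) / h0 x ^ 2
    = - 4 * (-((1 + η - g) * (u / h0 x)) / h0 x ^ 2) + 16 * (η ^ 2 / h0 x ^ 2) := by ring
  rw [e5] at this
  have e6 : 4 * ((1 + A) ^ 4) ^ 2 / (1 + x ^ 2) = 4 * (((1 + A) ^ 4) ^ 2 / (1 + x ^ 2)) := by ring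
  rw [e6]
  linarith

/-- pointwise bounds in a window -/
lemma ptw (c : Cmp a h0 h1 h2 h3 A) (k x u y0 : ℝ) (hk : 0 < k) (hk2 : k ≤ 1 / 2)
    (hy0 : 0 < y0) (hy1 : y0 ≤ 1) (hw1 : Yf x ^ 3 ≤ 3 * y0 ^ 3) (hw2 : y0 ^ 3 ≤ 3 * Yf x ^ 3) :
    |u| ≤ 600 * (1 + A) ^ 4 * (y0 ^ 4 + y0 ^ 8 * Ef h0 k x u) ∧
    |Nf a h0 h3 k x u| * y0 ^ 8 ≤ 600 * (1 + A) ^ 4 * (1 + y0 ^ 4 * Ef h0 k x u) := by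
  have hp := c.h0pos x
  obtain ⟨he, he2⟩ := c.eta x
  have hA := c.A1
  have hy := Yf_pos x
  have h9 : Yf x ^ 9 ≤ 1 := pow_le_one₀ (Yf_pos x).le (Yf_le_one x)
  have hup := c.h0up x
  have hlo := c.lo x
  have hE := Ef_nonneg (h0 := h0) k x u
  set E := Ef h0 k x u with hEd
  have hb := y_bd k (1 + u / h0 x) (y0 / 2) (h0 x ^ 2 * E) hk hk2 (by positivity) (by linarith)
    (by rw [hEd]; unfold Ef; rw [mul_div_cancel₀ _ (by positivity)]; simp)
  obtain ⟨b1, b2⟩ := hb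
  have e4 : 1 + u / h0 x - 1 = u / h0 x := by ring
  rw [e4] at b1
  have H1 : h0 x ≤ 3 * (1 + A) * y0 ^ 3 := by nlinarith
  have H2 : y0 ^ 3 ≤ 3 * h0 x := by linarith
  have hA4 : (1 + A) ^ 3 ≤ (1 + A) ^ 4 := pow_le_pow_right₀ (by linarith) (by norm_num)
  have hA14 : (1 + A) ≤ (1 + A) ^ 4 := le_self_pow₀ (by linarith) (by norm_num)
  constructor
  · have : |u| = h0 x * |u / h0 x| := by
      rw [abs_div, abs_of_pos hp]; field_simp
    rw [this]
    calc h0 x * |u / h0 x| ≤ h0 x * (y0 / 2 + 2 * (h0 x ^ 2 * E) / (y0 / 2)) := by gcongr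
      _ = h0 x * y0 / 2 + 4 * h0 x ^ 3 * E / y0 := by field_simp; ring
      _ ≤ (3 * (1 + A) * y0 ^ 3) * y0 / 2 + 4 * (3 * (1 + A) * y0 ^ 3) ^ 3 * E / y0 := by gcongr
      _ = 3 / 2 * (1 + A) * y0 ^ 4 + 108 * (1 + A) ^ 3 * (y0 ^ 8 * E) := by field_simp; ring
      _ ≤ 600 * (1 + A) ^ 4 * y0 ^ 4 + 600 * (1 + A) ^ 4 * (y0 ^ 8 * E) := by
        gcongr
        · linarith
        · norm_num
      _ = _ := by ring
  · rw [Nf_eq c]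
    set η := (x ^ 2 + a + h3 x) * h0 x ^ 3 - 1 with hη
    have e1 : (x ^ 2 + a + h3 x) * h0 x ^ 3 = 1 + η := by rw [hη]; ring
    rw [e1]
    set g := Gm k (1 + u / h0 x)
    have e7 : |(g - (1 + η)) / h0 x ^ 3| ≤ (|1 - g| + |η|) / h0 x ^ 3 := by
      rw [abs_div, abs_of_pos (by positivity : 0 < h0 x ^ 3)]
      gcongr
      have : g - (1 + η) = -((1 - g) + η) := by ring
      rw [this, abs_neg]
      exact abs_add_le _ _
    have H3 : y0 ^ 9 ≤ 27 * h0 x ^ 3 := by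
      calc y0 ^ 9 = (y0 ^ 3) ^ 3 := by ring
        _ ≤ (3 * h0 x) ^ 3 := by gcongr
        _ = _ := by ring
    have H4 : Yf x ^ 9 ≤ h0 x ^ 3 := by
      calc Yf x ^ 9 = (Yf x ^ 3) ^ 3 := by ring
        _ ≤ _ := by gcongr
    have hy8 : y0 ^ 8 ≤ 1 := pow_le_one₀ hy0.le hy1
    calc |(g - (1 + η)) / h0 x ^ 3| * y0 ^ 8 ≤ (|1 - g| + |η|) / h0 x ^ 3 * y0 ^ 8 := by gcongr
      _ ≤ ((38 * (y0 / 2) + h0 x ^ 2 * E / (y0 / 2)) + (1 + A) ^ 4 * h0 x ^ 3) / h0 x ^ 3 * y0 ^ 8 := by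
        gcongr
        exact he.trans (by gcongr)
      _ = 19 * (y0 ^ 9 / h0 x ^ 3) + 2 * (y0 ^ 4 * E) * (y0 ^ 3 / h0 x) + (1 + A) ^ 4 * y0 ^ 8 := by
        field_simp; ring
      _ ≤ 19 * 27 + 2 * (y0 ^ 4 * E) * 3 + (1 + A) ^ 4 * 1 := by
        gcongr
        · rw [div_le_iff₀ (by positivity)]; exact H3
        · rw [div_le_iff₀ (by positivity)]; exact H2
      _ ≤ _ := by
        have : 0 ≤ y0 ^ 4 * E := by positivity
        have h16 : (16:ℝ) ≤ (1 + A) ^ 4 := by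
          calc (16:ℝ) = (1 + 1) ^ 4 := by norm_num
            _ ≤ _ := by gcongr
        nlinarith

lemma Nf_cont (c : Cmp a h0 h1 h2 h3 A) (k : ℝ) (hk : 0 < k) :
    Continuous (Function.uncurry (Nf a h0 h3 k)) := by
  have hh : Continuous h0 := continuous_iff_continuousAt.2 fun x => (c.d0 x).continuousAt
  have hc := c.c3
  unfold Nf Function.uncurry
  refine Continuous.sub ?_ (by fun_prop)
  refine Continuous.div (by fun_prop) (by fun_prop) ?_
  intro p
  have : 0 < k * h0 p.1 := mul_pos hk (c.h0pos _)
  have := lt_of_lt_of_le this (le_max_right (h0 p.1 + p.2) (k * h0 p.1))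
  positivity

lemma cube_lip (m p q : ℝ) (hm : 0 < m) (hp : m ≤ p) (hq : m ≤ q) :
    |1 / p ^ 3 - 1 / q ^ 3| ≤ 3 / m ^ 4 * |p - q| := by
  have hp0 : 0 < p := by linarith
  have hq0 : 0 < q := by linarith
  have e : 1 / p ^ 3 - 1 / q ^ 3 = (1 / (p ^ 3 * q) + 1 / (p ^ 2 * q ^ 2) + 1 / (p * q ^ 3)) * (q - p) := by
    field_simp; ring
  rw [e, abs_mul, abs_sub_comm q p]
  gcongr
  rw [abs_of_pos (by positivity)]
  have t1 : 1 / (p ^ 3 * q) ≤ 1 / (m ^ 3 * m) := by gcongr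
  have t2 : 1 / (p ^ 2 * q ^ 2) ≤ 1 / (m ^ 2 * m ^ 2) := by gcongr
  have t3 : 1 / (p * q ^ 3) ≤ 1 / (m * m ^ 3) := by gcongr
  have e2 : 3 / m ^ 4 = 1 / (m ^ 3 * m) + 1 / (m ^ 2 * m ^ 2) + 1 / (m * m ^ 3) := by
    field_simp; ring
  linarith

lemma h0_min (c : Cmp a h0 h1 h2 h3 A) (T : ℝ) (hT : 0 < T) :
    ∃ m, 0 < m ∧ ∀ t ∈ Set.Icc (-T) T, m ≤ h0 t := by
  have hh : Continuous h0 := continuous_iff_continuousAt.2 fun x => (c.d0 x).continuousAt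
  obtain ⟨x, hx, hmin⟩ := (isCompact_Icc (a := -T) (b := T)).exists_isMinOn
    ⟨0, by constructor <;> linarith⟩ hh.continuousOn
  exact ⟨h0 x, c.h0pos x, fun t ht => hmin ht⟩

lemma Nf_lip (c : Cmp a h0 h1 h2 h3 A) (k : ℝ) (hk : 0 < k) (T : ℝ) (hT : 0 < T) :
    ∃ K, 0 ≤ K ∧ ∀ t ∈ Set.Icc (-T) T, ∀ p q, |Nf a h0 h3 k t p - Nf a h0 h3 k t q| ≤ K * |p - q| := by
  obtain ⟨m, hm, hmin⟩ := h0_min c T hT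
  refine ⟨3 / (k * m) ^ 4, by positivity, fun t ht p q => ?_⟩
  have h := hmin t ht
  have hkm : k * m ≤ k * h0 t := by gcongr
  unfold Nf
  have e : ∀ b d e : ℝ, b - e - (d - e) = b - d := by intros; ring
  rw [e]
  refine (cube_lip (k * m) _ _ (by positivity) (hkm.trans (le_max_right _ _))
    (hkm.trans (le_max_right _ _))).trans ?_
  refine mul_le_mul_of_nonneg_left ?_ (by positivity)
  have hmm := abs_max_sub_max_le_max (h0 t + p) (k * h0 t) (h0 t + q) (k * h0 t)
  simpa using hmm

lemma Nf_bd (c : Cmp a h0 h1 h2 h3 A) (k : ℝ) (hk : 0 < k) (T : ℝ) (hT : 0 < T) :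
    ∃ M, 0 ≤ M ∧ ∀ t ∈ Set.Icc (-T) T, ∀ p, |Nf a h0 h3 k t p| ≤ M := by
  obtain ⟨m, hm, hmin⟩ := h0_min c T hT
  refine ⟨1 / (k * m) ^ 3 + (1 + T ^ 2 + A), by have := c.A1; positivity, fun t ht p => ?_⟩
  have h := hmin t ht
  have hkm : k * m ≤ k * h0 t := by gcongr
  unfold Nf
  have hab : ∀ b d : ℝ, |b - d| ≤ |b| + |d| := fun b d => norm_sub_le b d
  refine (hab _ _).trans ?_
  have h5 := hkm.trans (le_max_right (h0 t + p) _)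
  have h6 : 0 < k * m := by positivity
  have h7 : 0 < max (h0 t + p) (k * h0 t) := by linarith
  gcongr
  · rw [abs_of_pos (by positivity)]
    gcongr
  · have h8 := abs_le.1 (c.Fnear t)
    have h9 : t ^ 2 ≤ T ^ 2 := sq_le_sq' ht.1 ht.2
    have h10 := c.Flo t
    have h11 : 0 ≤ t ^ 2 := sq_nonneg t
    rw [abs_of_nonneg (by linarith)]
    linarith

end


/-- energy along a solution -/
noncomputable def Rf (A : ℝ) (u0 u1 u2 : ℝ → ℝ) (x : ℝ) : ℝ :=
  u0 x * u2 x - u1 x ^ 2 / 2 - 4 * ((1 + A) ^ 4) ^ 2 * arctan x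

/-- solutions of the truncated problem -/
structure TS (a : ℝ) (h0 h3 : ℝ → ℝ) (k : ℝ) (u0 u1 u2 : ℝ → ℝ) : Prop where
  e0 : ∀ x, HasDerivAt u0 (u1 x) x
  e1 : ∀ x, HasDerivAt u1 (u2 x) x
  e2 : ∀ x, HasDerivAt u2 (Nf a h0 h3 k x (u0 x)) x

lemma unit_aux (v0 v1 v2 v3 e r r1 : ℝ → ℝ) (C B : ℝ) (hC : 0 ≤ C)
    (d0 : ∀ t, HasDerivAt v0 (v1 t) t) (d1 : ∀ t, HasDerivAt v1 (v2 t) t)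
    (d2 : ∀ t, HasDerivAt v2 (v3 t) t) (dr : ∀ t, HasDerivAt r (r1 t) t)
    (he : ∀ t, 0 ≤ e t)
    (b0 : ∀ t ∈ Set.Icc (0:ℝ) 1, |v0 t| ≤ C * (1 + e t))
    (b3 : ∀ t ∈ Set.Icc (0:ℝ) 1, |v3 t| ≤ C * (1 + e t))
    (br : ∀ t, r1 t ≤ - e t / 4) (hB : r 0 - r 1 ≤ 2 * B)
    (p p1 p2 p3 : ℝ → ℝ) (dp : ∀ t, HasDerivAt p (p1 t) t) (dp1 : ∀ t, HasDerivAt p1 (p2 t) t)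
    (dp2 : ∀ t, HasDerivAt p2 (p3 t) t) (z0 : p 1 = 0) (z1 : p1 1 = 0) (z2 : p2 1 = 0)
    (M : ℝ) (hM : 0 ≤ M) (bp : ∀ t ∈ Set.Icc (0:ℝ) 1, |p t| + |p3 t| ≤ M) :
    |v2 0 * p 0 - v1 0 * p1 0 + v0 0 * p2 0| ≤ M * C * (1 + 8 * B) := by
  set Z : ℝ → ℝ := fun t => v2 t * p t - v1 t * p1 t + v0 t * p2 t with hZ
  have dZ : ∀ t, HasDerivAt Z (v3 t * p t + v0 t * p3 t) t := by
    intro t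
    refine ((((d2 t).mul (dp t)).sub ((d1 t).mul (dp1 t))).add ((d0 t).mul (dp2 t))).congr_deriv ?_
    ring
  have hZ1 : Z 1 = 0 := by simp [hZ, z0, z1, z2]
  have bZ : ∀ t ∈ Set.Icc (0:ℝ) 1, |v3 t * p t + v0 t * p3 t| ≤ M * C * (1 - 4 * r1 t) := by
    intro t ht
    have h1 := b0 t ht
    have h2 := b3 t ht
    have h3 := bp t ht
    have h4 := br t
    have h5 := he t
    calc |v3 t * p t + v0 t * p3 t| ≤ |v3 t * p t| + |v0 t * p3 t| := abs_add_le _ _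
      _ = |v3 t| * |p t| + |v0 t| * |p3 t| := by rw [abs_mul, abs_mul]
      _ ≤ (C * (1 + e t)) * |p t| + (C * (1 + e t)) * |p3 t| := by gcongr
      _ = (C * (1 + e t)) * (|p t| + |p3 t|) := by ring
      _ ≤ (C * (1 + e t)) * M := by gcongr
      _ = M * C * (1 + e t) := by ring
      _ ≤ _ := by gcongr; linarith
  have mono : MonotoneOn (fun t => Z t + M * C * (t - 4 * r t)) (Set.Icc 0 1) := by
    apply monotoneOn_of_deriv_nonneg (convex_Icc 0 1)
    · intro t _
      exact (((dZ t).add (((hasDerivAt_id t).sub ((dr t).const_mul 4)).const_mul (M * C))).continuousAt).continuousWithinAt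
    · intro t _
      exact (((dZ t).add (((hasDerivAt_id t).sub ((dr t).const_mul 4)).const_mul (M * C))).differentiableAt).differentiableWithinAt
    · intro t ht
      rw [interior_Icc] at ht
      have h := ((dZ t).add (((hasDerivAt_id t).sub ((dr t).const_mul 4)).const_mul (M * C))).deriv
      have h' : deriv (fun t => Z t + M * C * (t - 4 * r t)) t = _ := h
      rw [h']
      have := (abs_le.1 (bZ t (Set.Ioo_subset_Icc_self ht))).1
      linarith
  have anti : AntitoneOn (fun t => Z t - M * C * (t - 4 * r t)) (Set.Icc 0 1) := by
    apply antitoneOn_of_deriv_nonpos (convex_Icc 0 1)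
    · intro t _
      exact (((dZ t).sub (((hasDerivAt_id t).sub ((dr t).const_mul 4)).const_mul (M * C))).continuousAt).continuousWithinAt
    · intro t _
      exact (((dZ t).sub (((hasDerivAt_id t).sub ((dr t).const_mul 4)).const_mul (M * C))).differentiableAt).differentiableWithinAt
    · intro t ht
      rw [interior_Icc] at ht
      have h := ((dZ t).sub (((hasDerivAt_id t).sub ((dr t).const_mul 4)).const_mul (M * C))).deriv
      have h' : deriv (fun t => Z t - M * C * (t - 4 * r t)) t = _ := h
      rw [h']
      have := (abs_le.1 (bZ t (Set.Ioo_subset_Icc_self ht))).2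
      linarith
  have m1 := mono (Set.left_mem_Icc.2 zero_le_one) (Set.right_mem_Icc.2 zero_le_one) zero_le_one
  have m2 := anti (Set.left_mem_Icc.2 zero_le_one) (Set.right_mem_Icc.2 zero_le_one) zero_le_one
  simp only [hZ1] at m1 m2
  have hMC : 0 ≤ M * C := by positivity
  have m3 : M * C * (1 + 4 * (r 0 - r 1)) ≤ M * C * (1 + 8 * B) :=
    mul_le_mul_of_nonneg_left (by linarith) hMC
  change |Z 0| ≤ _
  rw [abs_le]
  constructor <;> linarith

lemma poly_d (c0 c1 c2 c3 c4 c5 t : ℝ) :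
    HasDerivAt (fun t => c0 + c1 * t + c2 * t ^ 2 + c3 * t ^ 3 + c4 * t ^ 4 + c5 * t ^ 5)
      (c1 + 2 * c2 * t + 3 * c3 * t ^ 2 + 4 * c4 * t ^ 3 + 5 * c5 * t ^ 4 + 0 * t ^ 5) t := by
  have h := fun n : ℕ => hasDerivAt_pow n t
  refine ((((((hasDerivAt_const t c0).add ((hasDerivAt_id t).const_mul c1)).add
    ((h 2).const_mul c2)).add ((h 3).const_mul c3)).add ((h 4).const_mul c4)).add
    ((h 5).const_mul c5)).congr_deriv ?_
  norm_num
  ring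

lemma unit_test (v0 v1 v2 v3 e r r1 : ℝ → ℝ) (C B : ℝ) (hC : 0 ≤ C)
    (d0 : ∀ t, HasDerivAt v0 (v1 t) t) (d1 : ∀ t, HasDerivAt v1 (v2 t) t)
    (d2 : ∀ t, HasDerivAt v2 (v3 t) t) (dr : ∀ t, HasDerivAt r (r1 t) t)
    (he : ∀ t, 0 ≤ e t)
    (b0 : ∀ t ∈ Set.Icc (0:ℝ) 1, |v0 t| ≤ C * (1 + e t))
    (b3 : ∀ t ∈ Set.Icc (0:ℝ) 1, |v3 t| ≤ C * (1 + e t))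
    (br : ∀ t, r1 t ≤ - e t / 4) (hB : r 0 - r 1 ≤ 2 * B) :
    |v0 0| ≤ 1000 * C * (1 + 8 * B) ∧ |v1 0| ≤ 1000 * C * (1 + 8 * B) ∧
      |v2 0| ≤ 1000 * C * (1 + 8 * B) := by
  have key := fun c0 c1 c2 c3 c4 c5 : ℝ => unit_aux v0 v1 v2 v3 e r r1 C B hC d0 d1 d2 dr he b0 b3 br hB
    _ _ _ _ (poly_d c0 c1 c2 c3 c4 c5) (poly_d _ _ _ _ _ _) (poly_d _ _ _ _ _ _)
  have pw : ∀ t ∈ Set.Icc (0:ℝ) 1, ∀ n : ℕ, 0 ≤ t ^ n ∧ t ^ n ≤ 1 := fun t ht n =>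
    ⟨pow_nonneg ht.1 n, pow_le_one₀ ht.1 ht.2⟩
  have habs : ∀ p q : ℝ, |p| ≤ 100 → |q| ≤ 900 → |p| + |q| ≤ 1000 := by
    intros; linarith
  refine ⟨?_, ?_, ?_⟩
  · have := key 0 0 (1/2) (-3/2) (3/2) (-1/2) (by norm_num) (by norm_num) (by norm_num) 1000 (by norm_num) (by
      intro t ht
      obtain ⟨l0, r0⟩ := ht
      have h2 := pw t ⟨l0, r0⟩ 2
      have h3 := pw t ⟨l0, r0⟩ 3
      have h4 := pw t ⟨l0, r0⟩ 4
      have h5 := pw t ⟨l0, r0⟩ 5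
      apply habs <;> rw [abs_le] <;> constructor <;> norm_num <;> linarith)
    norm_num at this
    exact this
  · have := key 0 1 0 (-6) 8 (-3) (by norm_num) (by norm_num) (by norm_num) 1000 (by norm_num) (by
      intro t ht
      obtain ⟨l0, r0⟩ := ht
      have h2 := pw t ⟨l0, r0⟩ 2
      have h3 := pw t ⟨l0, r0⟩ 3
      have h4 := pw t ⟨l0, r0⟩ 4
      have h5 := pw t ⟨l0, r0⟩ 5
      apply habs <;> rw [abs_le] <;> constructor <;> norm_num <;> linarith)
    norm_num at this
    exact this
  · have := key 1 0 0 (-10) 15 (-6) (by norm_num) (by norm_num) (by norm_num) 1000 (by norm_num) (by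
      intro t ht
      obtain ⟨l0, r0⟩ := ht
      have h2 := pw t ⟨l0, r0⟩ 2
      have h3 := pw t ⟨l0, r0⟩ 3
      have h4 := pw t ⟨l0, r0⟩ 4
      have h5 := pw t ⟨l0, r0⟩ 5
      apply habs <;> rw [abs_le] <;> constructor <;> norm_num <;> linarith)
    norm_num at this
    exact this

lemma win_half (x z : ℝ) (h : |x - z| ≤ 1) : Yf x ^ 3 ≤ 3 * Yf z ^ 3 := by
  have hx := Yf_pos x
  have hz := Yf_pos z
  have e1 := Yf_pow9 x
  have e2 := Yf_pow9 z
  have hX : 1 + z ^ 2 ≤ 3 * (1 + x ^ 2) := by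
    have := abs_le.1 h
    nlinarith [sq_nonneg (2 * x - z), sq_nonneg (x - z)]
  have h9 : Yf x ^ 9 ≤ 3 * Yf z ^ 9 := by
    have p1 : Yf x ^ 9 * Yf z ^ 9 * (1 + z ^ 2) ≤ Yf x ^ 9 * Yf z ^ 9 * (3 * (1 + x ^ 2)) := by gcongr
    calc Yf x ^ 9 = Yf x ^ 9 * Yf z ^ 9 * (1 + z ^ 2) := by linear_combination - Yf x ^ 9 * e2
      _ ≤ _ := p1
      _ = _ := by linear_combination 3 * Yf z ^ 9 * e1
  have h27 : (Yf x ^ 3) ^ 3 ≤ (3 * Yf z ^ 3) ^ 3 := by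
    calc (Yf x ^ 3) ^ 3 = Yf x ^ 9 := by ring
      _ ≤ 3 * Yf z ^ 9 := h9
      _ ≤ 27 * Yf z ^ 9 := by gcongr; norm_num
      _ = _ := by ring
  exact le_of_pow_le_pow_left₀ (by norm_num) (by positivity) h27

section
variable {a A k : ℝ} {h0 h1 h2 h3 u0 u1 u2 : ℝ → ℝ}

lemma R_deriv (s : TS a h0 h3 k u0 u1 u2) (A x : ℝ) :
    HasDerivAt (Rf A u0 u1 u2) (u0 x * Nf a h0 h3 k x (u0 x) - 4 * ((1 + A) ^ 4) ^ 2 / (1 + x ^ 2)) x := by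
  refine ((((s.e0 x).mul (s.e2 x)).sub (((s.e1 x).pow 2).div_const 2)).sub
    ((hasDerivAt_arctan x).const_mul _)).congr_deriv ?_
  norm_num
  ring

lemma R_le (c : Cmp a h0 h1 h2 h3 A) (hk : 0 < k) (hk2 : k ≤ 1 / 2)
    (hkA : (1 + 2 * (1 + A) ^ 4) * k ^ 3 < 1) (x u : ℝ) :
    u * Nf a h0 h3 k x u - 4 * ((1 + A) ^ 4) ^ 2 / (1 + x ^ 2) ≤ - Ef h0 k x u / 4 := by
  have := diss c k x u hk hk2 hkA
  linarith

lemma R_anti (c : Cmp a h0 h1 h2 h3 A) (s : TS a h0 h3 k u0 u1 u2) (hk : 0 < k) (hk2 : k ≤ 1 / 2)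
    (hkA : (1 + 2 * (1 + A) ^ 4) * k ^ 3 < 1) : Antitone (Rf A u0 u1 u2) := by
  apply antitone_of_deriv_nonpos (fun x => (R_deriv s A x).differentiableAt)
  intro x
  rw [(R_deriv s A x).deriv]
  have := R_le c hk hk2 hkA x (u0 x)
  have h := Ef_nonneg (h0 := h0) k x (u0 x)
  linarith

lemma window (c : Cmp a h0 h1 h2 h3 A) (s : TS a h0 h3 k u0 u1 u2) (hk : 0 < k) (hk2 : k ≤ 1 / 2)
    (hkA : (1 + 2 * (1 + A) ^ 4) * k ^ 3 < 1) (x0 B : ℝ)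
    (hB : Rf A u0 u1 u2 x0 - Rf A u0 u1 u2 (x0 + Yf x0 ^ 4) ≤ 2 * B) :
    |u0 x0| ≤ 1000 * (600 * (1 + A) ^ 4) * (1 + 8 * B) * Yf x0 ^ 4 ∧
    |u1 x0| ≤ 1000 * (600 * (1 + A) ^ 4) * (1 + 8 * B) ∧
    |u2 x0| * Yf x0 ^ 4 ≤ 1000 * (600 * (1 + A) ^ 4) * (1 + 8 * B) := by
  have hy := Yf_pos x0
  have hy1 := Yf_le_one x0
  have hA := c.A1
  set y := Yf x0 with hyd
  have hl : ∀ t, HasDerivAt (fun t : ℝ => x0 + y ^ 4 * t) (y ^ 4) t := by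
    intro t
    refine (((hasDerivAt_id t).const_mul (y ^ 4)).const_add x0).congr_deriv ?_
    ring
  have hP : ∀ t ∈ Set.Icc (0:ℝ) 1, |u0 (x0 + y ^ 4 * t)| ≤ 600 * (1 + A) ^ 4 * (y ^ 4 + y ^ 8 * Ef h0 k (x0 + y ^ 4 * t) (u0 (x0 + y ^ 4 * t))) ∧
    |Nf a h0 h3 k (x0 + y ^ 4 * t) (u0 (x0 + y ^ 4 * t))| * y ^ 8 ≤ 600 * (1 + A) ^ 4 * (1 + y ^ 4 * Ef h0 k (x0 + y ^ 4 * t) (u0 (x0 + y ^ 4 * t))) := by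
    intro t ht
    have h4 : y ^ 4 ≤ 1 := pow_le_one₀ hy.le hy1
    have : |x0 + y ^ 4 * t - x0| ≤ 1 := by
      have h0t := ht.1
      have : x0 + y ^ 4 * t - x0 = y ^ 4 * t := by ring
      rw [this, abs_of_nonneg (by positivity)]
      exact mul_le_one₀ h4 h0t ht.2
    exact ptw c k _ _ y hk hk2 hy hy1 (win_half _ _ this) (win_half _ _ (by rw [abs_sub_comm]; exact this))
  have h := unit_test (fun t => u0 (x0 + y ^ 4 * t) / y ^ 4) (fun t => u1 (x0 + y ^ 4 * t))
    (fun t => u2 (x0 + y ^ 4 * t) * y ^ 4)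
    (fun t => Nf a h0 h3 k (x0 + y ^ 4 * t) (u0 (x0 + y ^ 4 * t)) * y ^ 8)
    (fun t => y ^ 4 * Ef h0 k (x0 + y ^ 4 * t) (u0 (x0 + y ^ 4 * t)))
    (fun t => Rf A u0 u1 u2 (x0 + y ^ 4 * t))
    _ (600 * (1 + A) ^ 4) B (by positivity)
    (fun t => (((s.e0 _).comp t (hl t)).div_const (y ^ 4)).congr_deriv (by field_simp))
    (fun t => (s.e1 _).comp t (hl t))
    (fun t => (((s.e2 _).comp t (hl t)).mul_const (y ^ 4)).congr_deriv (by ring))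
    (fun t => (R_deriv s A _).comp t (hl t))
    (fun t => mul_nonneg (by positivity) (Ef_nonneg _ _ _))
    (by
      intro t ht
      have := (hP t ht).1
      rw [abs_div, abs_of_pos (by positivity : 0 < y ^ 4), div_le_iff₀ (by positivity)]
      refine this.trans (le_of_eq (by ring)))
    (by
      intro t ht
      rw [abs_mul, abs_of_pos (by positivity : 0 < y ^ 8)]
      exact (hP t ht).2)
    (by
      intro t
      have := R_le c hk hk2 hkA (x0 + y ^ 4 * t) (u0 (x0 + y ^ 4 * t))
      have h4 : 0 ≤ y ^ 4 := by positivity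
      have := mul_le_mul_of_nonneg_right this h4
      refine this.trans (le_of_eq (by ring)))
    (by simpa using hB)
  simp only [mul_zero, add_zero] at h
  obtain ⟨g0, g1, g2⟩ := h
  refine ⟨?_, g1, ?_⟩
  · rwa [abs_div, abs_of_pos (by positivity : 0 < y ^ 4), div_le_iff₀ (by positivity)] at g0
  · rwa [abs_mul, abs_of_pos (by positivity : 0 < y ^ 4)] at g2

end


section
variable {a A k : ℝ} {h0 h1 h2 h3 u0 u1 u2 : ℝ → ℝ}

lemma lower (c : Cmp a h0 h1 h2 h3 A) (s : TS a h0 h3 k u0 u1 u2) (hk : 0 < k) (hk2 : k ≤ 1 / 2)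
    (hkA : (1 + 2 * (1 + A) ^ 4) * k ^ 3 < 1) (B C1 : ℝ) (hC1 : 0 ≤ C1)
    (hB : ∀ x z, Rf A u0 u1 u2 x - Rf A u0 u1 u2 z ≤ 2 * B)
    (hu1 : ∀ x, |u1 x| ≤ C1) (hk3 : k * (3 * (1 + 2 * A + C1)) ≤ 1 / 2)
    (hk4 : 2 * B * (144 * k ^ 2 * (3 * (1 + 2 * A + C1)) ^ 3 * (1 + A) ^ 2) < 1) (x0 : ℝ) :
    k * h0 x0 < h0 x0 + u0 x0 := by
  by_contra hcon
  push Not at hcon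
  have hA := c.A1
  have hy := Yf_pos x0
  have hy1 := Yf_le_one x0
  have hup0 := c.h0up x0
  set y := Yf x0 with hyd
  set C3 := 3 * (1 + 2 * A + C1) with hC3
  have hC3p : 1 ≤ C3 := by rw [hC3]; linarith
  have hy4 : y ^ 4 ≤ 1 := pow_le_one₀ hy.le hy1
  have hg : Antitone (fun x => (h0 x + u0 x) - (A + C1) * x) := by
    have hd : ∀ x, HasDerivAt (fun x => (h0 x + u0 x) - (A + C1) * x) (h1 x + u1 x - (A + C1) * 1) x :=
      fun x => ((c.d0 x).add (s.e0 x)).sub ((hasDerivAt_id x).const_mul (A + C1))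
    apply antitone_of_deriv_nonpos (fun x => (hd x).differentiableAt)
    intro x
    rw [(hd x).deriv]
    have b1 := (abs_le.1 (c.b1 x)).2
    have b2 := (abs_le.1 (hu1 x)).2
    linarith
  set E0 := 1 / (4 * (k * C3) ^ 3) / (9 * (1 + A) ^ 2 * y ^ 6) with hE0
  have hE : ∀ x ∈ Set.Icc x0 (x0 + k * y ^ 4), E0 ≤ Ef h0 k x (u0 x) := by
    intro x hx
    obtain ⟨hx1, hx2⟩ := hx
    have hw : |x - x0| ≤ 1 := by
      rw [abs_of_nonneg (by linarith)]
      nlinarith [pow_pos hy 4]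
    have w1 := win_half x x0 hw
    have w2 := win_half x0 x (by rw [abs_sub_comm]; exact hw)
    have hp := c.h0pos x
    have hlo := c.lo x
    have hup := c.h0up x
    have hgx := hg hx1
    simp only at hgx
    have hy3 : 0 < y ^ 3 := pow_pos hy 3
    have t1 : h0 x + u0 x ≤ k * (y ^ 3 * (1 + A)) + (A + C1) * (k * y ^ 4) := by
      have q1 : k * h0 x0 ≤ k * (y ^ 3 * (1 + A)) := by gcongr
      have q2 : (A + C1) * (x - x0) ≤ (A + C1) * (k * y ^ 4) := by gcongr; linarith
      linarith
    have t2 : h0 x + u0 x ≤ k * (1 + 2 * A + C1) * y ^ 3 := by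
      have q3 : y ^ 4 ≤ y ^ 3 := pow_le_pow_of_le_one hy.le hy1 (by norm_num)
      have q4 : (A + C1) * (k * y ^ 4) ≤ (A + C1) * (k * y ^ 3) := by gcongr
      linarith
    have t3 : 1 + u0 x / h0 x ≤ k * C3 := by
      have q5 : 1 + u0 x / h0 x = (h0 x + u0 x) / h0 x := by field_simp
      rw [q5, div_le_iff₀ hp]
      have q6 : y ^ 3 ≤ 3 * h0 x := by linarith
      calc _ ≤ _ := t2
        _ ≤ k * (1 + 2 * A + C1) * (3 * h0 x) := by gcongr
        _ = _ := by rw [hC3]; ring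
    have t4 : 1 / 2 ≤ |u0 x / h0 x| := by
      rw [le_abs]; right; linarith
    have hkC : 0 < k * C3 := by positivity
    have t5 : 1 / (k * C3) ^ 3 ≤ Gm k (1 + u0 x / h0 x) := by
      unfold Gm
      have m1 : max (1 + u0 x / h0 x) k ≤ k * C3 := max_le t3 (by nlinarith)
      have m2 : 0 < max (1 + u0 x / h0 x) k := lt_of_lt_of_le hk (le_max_right _ _)
      gcongr
    have t6 : 8 ≤ 1 / (k * C3) ^ 3 := by
      rw [le_div_iff₀ (by positivity)]
      have : (k * C3) ^ 3 ≤ (1 / 2) ^ 3 := by gcongr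
      linarith
    have t7 : 1 / (2 * (k * C3) ^ 3) ≤ |1 - Gm k (1 + u0 x / h0 x)| := by
      rw [le_abs]; right
      have : 1 / (2 * (k * C3) ^ 3) = (1 / (k * C3) ^ 3) / 2 := by field_simp
      rw [this]; linarith
    have t8 : h0 x ^ 2 ≤ 9 * (1 + A) ^ 2 * y ^ 6 := by
      calc h0 x ^ 2 ≤ (3 * y ^ 3 * (1 + A)) ^ 2 := by
            gcongr
            exact hup.trans (by gcongr)
        _ = _ := by ring
    rw [hE0]
    unfold Ef
    have t9 : 1 / (4 * (k * C3) ^ 3) = 1 / 2 * (1 / (2 * (k * C3) ^ 3)) := by field_simp; norm_num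
    rw [t9]
    gcongr
  have hk' : x0 ≤ x0 + k * y ^ 4 := by have := pow_pos hy 4; nlinarith
  have hd : ∀ x, HasDerivAt (fun x => Rf A u0 u1 u2 x + E0 / 4 * x) (u0 x * Nf a h0 h3 k x (u0 x) - 4 * ((1 + A) ^ 4) ^ 2 / (1 + x ^ 2) + E0 / 4 * 1) x :=
    fun x => (R_deriv s A x).add ((hasDerivAt_id x).const_mul _)
  have anti : AntitoneOn (fun x => Rf A u0 u1 u2 x + E0 / 4 * x) (Set.Icc x0 (x0 + k * y ^ 4)) := by
    apply antitoneOn_of_deriv_nonpos (convex_Icc _ _)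
    · exact fun x _ => (hd x).continuousAt.continuousWithinAt
    · exact fun x _ => (hd x).differentiableAt.differentiableWithinAt
    · intro x hx
      rw [interior_Icc] at hx
      rw [(hd x).deriv]
      have := R_le c hk hk2 hkA x (u0 x)
      have := hE x (Set.Ioo_subset_Icc_self hx)
      linarith
  have m := anti (Set.left_mem_Icc.2 hk') (Set.right_mem_Icc.2 hk') hk'
  simp only at m
  have hb := hB x0 (x0 + k * y ^ 4)
  have l1 : E0 / 4 * (k * y ^ 4) ≤ 2 * B := by linarith
  have e1 : E0 / 4 * (k * y ^ 4) = 1 / (144 * k ^ 2 * C3 ^ 3 * (1 + A) ^ 2) / y ^ 2 := by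
    rw [hE0]; field_simp; norm_num
  have l2 : 1 / (144 * k ^ 2 * C3 ^ 3 * (1 + A) ^ 2) ≤ 2 * B := by
    rw [e1] at l1
    refine le_trans ?_ l1
    rw [le_div_iff₀ (by positivity)]
    refine mul_le_of_le_one_right (by positivity) (pow_le_one₀ hy.le hy1)
  rw [div_le_iff₀ (by positivity)] at l2
  linarith

lemma ts_of_flow {f : ℝ → ℝ × ℝ × ℝ}
    (h : ∀ t, HasDerivAt f (V3 (Nf a h0 h3 k) t (f t)) t) :
    TS a h0 h3 k (fun t => (f t).1) (fun t => (f t).2.1) (fun t => (f t).2.2) where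
  e0 := fun x => (h x).fst
  e1 := fun x => (h x).snd.fst
  e2 := fun x => (h x).snd.snd

lemma shoot_sign (v0 v1 v2 v3 : ℝ → ℝ) (n M : ℝ) (hn : 0 < n)
    (d0 : ∀ t, HasDerivAt v0 (v1 t) t) (d1 : ∀ t, HasDerivAt v1 (v2 t) t)
    (d2 : ∀ t, HasDerivAt v2 (v3 t) t) (hM0 : 0 ≤ M) (hM : ∀ t ∈ Set.Icc (-n) n, v3 t ≤ M)
    (i0 : v0 n = 0) (i1 : v1 n = 0) (i2 : v2 n = 2 * n * M) : 0 ≤ v0 (-n) := by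
  have hmem : n ∈ Set.Icc (-n) n := ⟨by linarith, le_rfl⟩
  have s2 : ∀ t ∈ Set.Icc (-n) n, 0 ≤ v2 t := by
    have hd : ∀ x, HasDerivAt (fun x => v2 x - M * x) (v3 x - M * 1) x :=
      fun x => (d2 x).sub ((hasDerivAt_id x).const_mul _)
    have anti : AntitoneOn (fun x => v2 x - M * x) (Set.Icc (-n) n) := by
      apply antitoneOn_of_deriv_nonpos (convex_Icc _ _)
      · exact fun x _ => (hd x).continuousAt.continuousWithinAt
      · exact fun x _ => (hd x).differentiableAt.differentiableWithinAt
      · intro x hx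
        rw [interior_Icc] at hx
        rw [(hd x).deriv]
        have := hM x (Set.Ioo_subset_Icc_self hx)
        linarith
    intro t ht
    have := anti ht hmem ht.2
    simp only [i2] at this
    have h3 : 0 ≤ M * (n + t) := mul_nonneg hM0 (by linarith [ht.1])
    linarith
  have s1 : ∀ t ∈ Set.Icc (-n) n, v1 t ≤ 0 := by
    have mono : MonotoneOn v1 (Set.Icc (-n) n) := by
      apply monotoneOn_of_deriv_nonneg (convex_Icc _ _)
      · exact fun x _ => (d1 x).continuousAt.continuousWithinAt
      · exact fun x _ => (d1 x).differentiableAt.differentiableWithinAt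
      · intro x hx
        rw [interior_Icc] at hx
        rw [(d1 x).deriv]
        exact s2 x (Set.Ioo_subset_Icc_self hx)
    intro t ht
    have := mono ht hmem ht.2
    linarith
  have anti : AntitoneOn v0 (Set.Icc (-n) n) := by
    apply antitoneOn_of_deriv_nonpos (convex_Icc _ _)
    · exact fun x _ => (d0 x).continuousAt.continuousWithinAt
    · exact fun x _ => (d0 x).differentiableAt.differentiableWithinAt
    · intro x hx
      rw [interior_Icc] at hx
      rw [(d0 x).deriv]
      exact s1 x (Set.Ioo_subset_Icc_self hx)
  have := anti ⟨le_rfl, by linarith⟩ hmem (by linarith : -n ≤ n)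
  linarith

lemma shoot (c : Cmp a h0 h1 h2 h3 A) (hk : 0 < k) (n : ℝ) (hn : 0 < n) :
    ∃ f : ℝ → ℝ × ℝ × ℝ, (∀ t, HasDerivAt f (V3 (Nf a h0 h3 k) t (f t)) t) ∧
      (f n).1 = 0 ∧ (f n).2.1 = 0 ∧ (f (-n)).1 = 0 := by
  obtain ⟨S, hS, hSc⟩ := ode_flow (Nf a h0 h3 k) (Nf_cont c k hk) (Nf_lip c k hk) (Nf_bd c k hk) n
  obtain ⟨M, hM0, hM⟩ := Nf_bd c k hk n hn
  have hcont : Continuous (fun σ : ℝ => (S (0, 0, σ) (-n)).1) :=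
    continuous_fst.comp ((hSc (-n)).comp (by fun_prop))
  have hpos : 0 ≤ (S (0, 0, 2 * n * M) (-n)).1 := by
    have ts := ts_of_flow (hS (0, 0, 2 * n * M)).2
    have hi := (hS (0, 0, 2 * n * M)).1
    exact shoot_sign _ _ _ _ n M hn ts.e0 ts.e1 ts.e2 hM0
      (fun t ht => (abs_le.1 (hM t ht _)).2) (by simp [hi]) (by simp [hi]) (by simp [hi])
  have hneg : (S (0, 0, -(2 * n * M)) (-n)).1 ≤ 0 := by
    have ts := ts_of_flow (hS (0, 0, -(2 * n * M))).2
    have hi := (hS (0, 0, -(2 * n * M))).1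
    have := shoot_sign _ _ _ _ n M hn (fun t => (ts.e0 t).neg) (fun t => (ts.e1 t).neg)
      (fun t => (ts.e2 t).neg) hM0
      (fun t ht => by have := (abs_le.1 (hM t ht (S (0, 0, -(2 * n * M)) t).1)).1; linarith)
      (by simp [hi]) (by simp [hi]) (by simp [hi])
    simpa using this
  obtain ⟨σ, hσ⟩ := mem_range_of_exists_le_of_exists_ge hcont ⟨_, hneg⟩ ⟨_, hpos⟩
  refine ⟨S (0, 0, σ), (hS _).2, ?_, ?_, hσ⟩
  · rw [(hS _).1]
  · rw [(hS _).1]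

/-- bound for the energy -/
noncomputable def Bc (A : ℝ) : ℝ := 8 * ((1 + A) ^ 4) ^ 2

lemma globalSol (c : Cmp a h0 h1 h2 h3 A) (hk : 0 < k) (hk2 : k ≤ 1 / 2)
    (hkA : (1 + 2 * (1 + A) ^ 4) * k ^ 3 < 1) :
    ∃ u0 u1 u2, TS a h0 h3 k u0 u1 u2 ∧ ∀ x z, Rf A u0 u1 u2 x - Rf A u0 u1 u2 z ≤ 2 * Bc A := by
  obtain ⟨S, hS, hSc⟩ := ode_flow (Nf a h0 h3 k) (Nf_cont c k hk) (Nf_lip c k hk) (Nf_bd c k hk) 0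
  have hA := c.A1
  set B := Bc A with hB
  have hatan : ∀ x, |4 * ((1 + A) ^ 4) ^ 2 * arctan x| ≤ B := by
    intro x
    have h1 : |arctan x| ≤ 2 := by
      have := arctan_lt_pi_div_two x
      have := neg_pi_div_two_lt_arctan x
      have := pi_le_four
      rw [abs_le]; constructor <;> linarith
    rw [abs_mul, abs_of_nonneg (by positivity), hB]
    unfold Bc
    nlinarith [show 0 ≤ ((1 + A) ^ 4) ^ 2 by positivity]
  have hTS : ∀ z, TS a h0 h3 k (fun t => (S z t).1) (fun t => (S z t).2.1) (fun t => (S z t).2.2) :=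
    fun z => ts_of_flow (hS z).2
  set R : ℝ × ℝ × ℝ → ℝ → ℝ := fun z => Rf A (fun t => (S z t).1) (fun t => (S z t).2.1) (fun t => (S z t).2.2) with hR
  have hanti : ∀ z, Antitone (R z) := fun z => R_anti c (hTS z) hk hk2 hkA
  have hRc : ∀ t, Continuous (fun z => R z t) := by
    intro t
    have := hSc t
    simp only [hR]
    unfold Rf
    fun_prop
  set K : ℕ → Set (ℝ × ℝ × ℝ) := fun n => {z | R z (-((n:ℝ) + 1)) ≤ B ∧ -B ≤ R z ((n:ℝ) + 1)} with hK
  have hcl : ∀ n, IsClosed (K n) := fun n =>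
    (isClosed_le (hRc _) continuous_const).inter (isClosed_le continuous_const (hRc _))
  have hsub : ∀ n, K (n + 1) ⊆ K n := by
    intro n z hz
    obtain ⟨z1, z2⟩ := hz
    refine ⟨(hanti z ?_).trans z1, z2.trans (hanti z ?_)⟩ <;> push_cast <;> linarith
  have hne : ∀ n, (K n).Nonempty := by
    intro n
    have hn : (0:ℝ) < (n:ℝ) + 1 := by positivity
    obtain ⟨f, hf, f1, f2, f3⟩ := shoot c hk ((n:ℝ) + 1) hn
    obtain ⟨L, hL0, hL⟩ := Nf_lip c k hk ((n:ℝ) + 2) (by positivity)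
    have heq := ode_unique (Nf a h0 h3 k) ((n:ℝ) + 2) L hL0 hL 0 ⟨by linarith, by linarith⟩
      (S (f 0)) f (fun t _ => (hS (f 0)).2 t) (fun t _ => hf t) (hS (f 0)).1
    have q1 : S (f 0) ((n:ℝ) + 1) = f ((n:ℝ) + 1) := heq ⟨by linarith, by linarith⟩
    have q2 : S (f 0) (-((n:ℝ) + 1)) = f (-((n:ℝ) + 1)) := heq ⟨by linarith, by linarith⟩
    refine ⟨f 0, ?_, ?_⟩
    · have := (abs_le.1 (hatan (-((n:ℝ) + 1)))).1
      simp only [hR, Rf]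
      rw [q2, f3]
      nlinarith [sq_nonneg (f (-((n:ℝ) + 1))).2.1]
    · have := (abs_le.1 (hatan ((n:ℝ) + 1))).2
      simp only [hR, Rf]
      rw [q1, f1, f2]
      linarith
  have hY0 : Yf 0 = 1 := by simp [Yf]
  have hcomp : IsCompact (K 0) := by
    set C := 1000 * (600 * (1 + A) ^ 4) * (1 + 8 * B)
    refine Metric.isCompact_of_isClosed_isBounded (hcl 0) ?_
    refine (Metric.isBounded_closedBall (x := (0 : ℝ × ℝ × ℝ)) (r := C)).subset ?_
    intro z hz
    obtain ⟨z1, z2⟩ := hz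
    have r1 := hanti z (show (-(((0:ℕ):ℝ) + 1)) ≤ 0 by norm_num)
    have hw := window c (hTS z) hk hk2 hkA 0 B (by
      rw [hY0]
      norm_num at z1 z2 r1 ⊢
      change R z 0 ≤ 2 * B + R z 1
      linarith)
    rw [hY0, (hS z).1] at hw
    norm_num at hw
    obtain ⟨w0, w1, w2⟩ := hw
    rw [mem_closedBall_zero_iff, Prod.norm_def, Prod.norm_def]
    refine max_le ?_ (max_le ?_ ?_)
    · refine w0.trans (le_of_eq ?_); simp only [C]
    · refine w1.trans (le_of_eq ?_); simp only [C]
    · refine w2.trans (le_of_eq ?_); simp only [C]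
  obtain ⟨z, hz⟩ := IsCompact.nonempty_iInter_of_sequence_nonempty_isCompact_isClosed K hsub hne hcomp hcl
  rw [Set.mem_iInter] at hz
  refine ⟨_, _, _, hTS z, ?_⟩
  have hbd : ∀ x, R z x ≤ B ∧ -B ≤ R z x := by
    intro x
    obtain ⟨n, hn⟩ := exists_nat_ge |x|
    obtain ⟨z1, z2⟩ := hz n
    have := abs_le.1 hn
    exact ⟨(hanti z (by linarith)).trans z1, z2.trans (hanti z (by linarith))⟩
  intro x w
  have h1 := (hbd x).1
  have h2 := (hbd w).2
  change R z x - R z w ≤ _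
  linarith

end

lemma exists_H (a : ℝ) : ∃ (H H1 H2 : ℝ → ℝ) (C : ℝ), 0 ≤ C ∧ (∀ x, 0 < H x) ∧
    (∀ x, HasDerivAt H (H1 x) x) ∧ (∀ x, HasDerivAt H1 (H2 x) x) ∧
    (∀ x, HasDerivAt H2 (1 / H x ^ 3 - (x ^ 2 + a)) x) ∧
    (∀ x, |H x - Yf x ^ 3| ≤ C * Yf x ^ 4) ∧ (∀ x, |H1 x| ≤ C) ∧ (∀ x, |H2 x| * Yf x ^ 4 ≤ C) := by
  obtain ⟨h0, h1, h2, h3, A, c⟩ := cmp_exists a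
  have hA := c.A1
  have hBp : 0 ≤ Bc A := by unfold Bc; positivity
  set C1 := 1000 * (600 * (1 + A) ^ 4) * (1 + 8 * Bc A) with hC1
  have hC1p : 0 ≤ C1 := by positivity
  obtain ⟨k, hk, hk2, hkA, hk3, hk4⟩ : ∃ k : ℝ, 0 < k ∧ k ≤ 1 / 2 ∧ (1 + 2 * (1 + A) ^ 4) * k ^ 3 < 1 ∧
      k * (3 * (1 + 2 * A + C1)) ≤ 1 / 2 ∧
      2 * Bc A * (144 * k ^ 2 * (3 * (1 + 2 * A + C1)) ^ 3 * (1 + A) ^ 2) < 1 := by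
    have ev : ∀ᶠ k : ℝ in nhds 0, k < 1 / 2 ∧ (1 + 2 * (1 + A) ^ 4) * k ^ 3 < 1 ∧
      k * (3 * (1 + 2 * A + C1)) < 1 / 2 ∧
      2 * Bc A * (144 * k ^ 2 * (3 * (1 + 2 * A + C1)) ^ 3 * (1 + A) ^ 2) < 1 := by
      have t : ∀ (f : ℝ → ℝ) (b : ℝ), Continuous f → f 0 < b → ∀ᶠ k in nhds 0, f k < b :=
        fun f b hf h => (hf.tendsto 0).eventually (gt_mem_nhds h)
      refine (t _ _ continuous_id (by norm_num)).and ((t _ _ (by fun_prop) (by norm_num)).and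
        ((t _ _ (by fun_prop) (by norm_num)).and (t _ _ (by fun_prop) (by norm_num))))
    have ev2 := (ev.filter_mono (nhdsWithin_le_nhds (s := Set.Ioi 0))).and self_mem_nhdsWithin
    obtain ⟨k, ⟨e1, e2, e3, e4⟩, e5⟩ := ev2.exists
    exact ⟨k, e5, e1.le, e2, e3.le, e4⟩
  obtain ⟨u0, u1, u2, ts, hR⟩ := globalSol c hk hk2 hkA
  have hw := fun x => window c ts hk hk2 hkA x (Bc A) (hR _ _)
  have hlow := fun x => lower c ts hk hk2 hkA (Bc A) C1 hC1p hR (fun x => (hw x).2.1) hk3 hk4 x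
  refine ⟨fun x => h0 x + u0 x, fun x => h1 x + u1 x, fun x => h2 x + u2 x, A + C1, by positivity,
    ?_, fun x => (c.d0 x).add (ts.e0 x), fun x => (c.d1 x).add (ts.e1 x), ?_, ?_, ?_, ?_⟩
  · intro x
    have := mul_pos hk (c.h0pos x)
    linarith [hlow x]
  · intro x
    refine ((c.d2 x).add (ts.e2 x)).congr_deriv ?_
    unfold Nf
    rw [max_eq_left (hlow x).le]
    ring
  · intro x
    have hy := Yf_pos x
    have q1 : |h0 x - Yf x ^ 3| ≤ A * Yf x ^ 4 := by
      rw [abs_of_nonneg (by linarith [c.lo x])]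
      have : Yf x ^ 12 ≤ Yf x ^ 4 := pow_le_pow_of_le_one hy.le (Yf_le_one x) (by norm_num)
      nlinarith [c.hi x]
    have q2 := (hw x).1
    have e : h0 x + u0 x - Yf x ^ 3 = (h0 x - Yf x ^ 3) + u0 x := by ring
    rw [e]
    refine (abs_add_le _ _).trans ?_
    rw [add_mul]
    exact add_le_add q1 q2
  · exact fun x => (abs_add_le _ _).trans (add_le_add (c.b1 x) (hw x).2.1)
  · intro x
    have hy := Yf_pos x
    have h4 : Yf x ^ 4 ≤ 1 := pow_le_one₀ hy.le (Yf_le_one x)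
    calc |h2 x + u2 x| * Yf x ^ 4 ≤ (|h2 x| + |u2 x|) * Yf x ^ 4 := by
          gcongr; exact abs_add_le _ _
      _ = |h2 x| * Yf x ^ 4 + |u2 x| * Yf x ^ 4 := by ring
      _ ≤ A * 1 + C1 := by
        refine add_le_add ?_ (hw x).2.2
        exact mul_le_mul (c.b2 x) h4 (by positivity) (by linarith)
      _ = _ := by ring


lemma exists_time : ∃ g : ℝ → ℝ, (∀ t, HasDerivAt g (Yf (g t) ^ 4) t) ∧
    Tendsto g atTop atTop ∧ Tendsto g atBot atBot := by
  have hc : Continuous (fun x => 1 / Yf x ^ 4) :=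
    continuous_const.div (Yf_continuous.pow 4) (fun x => (pow_pos (Yf_pos x) 4).ne')
  set T : ℝ → ℝ := fun x => ∫ y in (0:ℝ)..x, 1 / Yf y ^ 4 with hT
  have hd : ∀ x, HasDerivAt T (1 / Yf x ^ 4) x := fun x =>
    intervalIntegral.integral_hasDerivAt_right (hc.intervalIntegrable _ _)
      (hc.stronglyMeasurableAtFilter _ _) hc.continuousAt
  have hp : ∀ x, 1 ≤ 1 / Yf x ^ 4 := fun x => by
    rw [le_div_iff₀ (pow_pos (Yf_pos x) 4), one_mul]
    exact pow_le_one₀ (Yf_pos x).le (Yf_le_one x)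
  have hs : StrictMono T := strictMono_of_deriv_pos (fun x => by
    rw [(hd x).deriv]; linarith [hp x])
  have hm : Monotone (fun x => T x - x) := by
    have hd2 : ∀ x, HasDerivAt (fun x => T x - x) (1 / Yf x ^ 4 - 1) x := fun x =>
      (hd x).sub (hasDerivAt_id x)
    apply monotone_of_deriv_nonneg (fun x => (hd2 x).differentiableAt)
    intro x
    rw [(hd2 x).deriv]
    linarith [hp x]
  have hT0 : T 0 = 0 := by simp [hT]
  have hTc : Continuous T := continuous_iff_continuousAt.2 fun x => (hd x).continuousAt
  have hsurj : Function.Surjective T := by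
    apply hTc.surjective
    · refine tendsto_atTop_mono' _ ?_ tendsto_id
      filter_upwards [eventually_ge_atTop 0] with x hx
      have := hm hx
      simp only [hT0] at this
      simp only [id]; linarith
    · refine tendsto_atBot_mono' _ ?_ tendsto_id
      filter_upwards [eventually_le_atBot 0] with x hx
      have := hm hx
      simp only [hT0] at this
      simp only [id]; linarith
  let e := hs.orderIsoOfSurjective T hsurj
  have he : ∀ t, T (e.symm t) = t := fun t => e.apply_symm_apply t
  refine ⟨e.symm, fun t => ?_, e.symm.tendsto_atTop, e.symm.tendsto_atBot⟩
  have := HasDerivAt.of_local_left_inverse (f := T) (g := e.symm) (a := t)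
    e.symm.continuous.continuousAt (hd _) (by have := hp (e.symm t); positivity)
    (Eventually.of_forall he)
  refine this.congr_deriv ?_
  simp

lemma Yf_tendsto : Tendsto Yf atTop (nhds 0) ∧ Tendsto Yf atBot (nhds 0) := by
  have h : Tendsto (fun x : ℝ => x ^ (-(1 / 9) : ℝ)) atTop (nhds 0) :=
    tendsto_rpow_neg_atTop (by norm_num)
  have h2 : Tendsto (fun x : ℝ => 1 + x ^ 2) atTop atTop :=
    tendsto_atTop_add_const_left _ _ (tendsto_pow_atTop (by norm_num))
  refine ⟨h.comp h2, ?_⟩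
  have h3 : Tendsto (fun x : ℝ => 1 + |x| ^ 2) atBot atTop := h2.comp tendsto_abs_atBot_atTop
  simp only [sq_abs] at h3
  exact h.comp h3

lemma trig_facts (x : ℝ) : sin (arctan x) = x * cos (arctan x) ∧ cos (arctan x) ^ 2 = Yf x ^ 9 ∧
    cos (arctan x) ^ ((26:ℝ) / 9) = Yf x ^ 13 ∧ cos (arctan x) ^ ((34:ℝ) / 9) = Yf x ^ 17 ∧
    cos (arctan x) * cos (arctan x) ^ ((17:ℝ) / 3) = Yf x ^ 30 ∧
    cos (arctan x) * cos (arctan x) ^ ((17:ℝ) / 9) = Yf x ^ 13 := by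
  have hX : 0 < 1 + x ^ 2 := by positivity
  have hcv : cos (arctan x) = (1 + x ^ 2) ^ (-(1 / 2) : ℝ) := by
    rw [cos_arctan, sqrt_eq_rpow, rpow_neg hX.le, one_div]
  have hYn : ∀ n : ℕ, Yf x ^ n = (1 + x ^ 2) ^ (-(n / 9) : ℝ) := by
    intro n
    unfold Yf
    rw [← rpow_natCast, ← rpow_mul hX.le]
    congr 1; ring
  refine ⟨?_, ?_, ?_, ?_, ?_, ?_⟩
  · rw [sin_arctan, cos_arctan]; ring
  · rw [hcv, hYn, ← rpow_natCast, ← rpow_mul hX.le]; norm_num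
  · rw [hcv, hYn, ← rpow_mul hX.le]; norm_num
  · rw [hcv, hYn, ← rpow_mul hX.le]; norm_num
  · rw [hcv, hYn, ← rpow_mul hX.le, ← rpow_add hX]; norm_num
  · rw [hcv, hYn, ← rpow_mul hX.le, ← rpow_add hX]; norm_num



lemma dPsi_arctan (a Φ W Ψ x : ℝ) : dPsi a Φ W Ψ (arctan x) =
    1 / Φ ^ 3 - 1 - (a - 1) * Yf x ^ 9 - ((16 / 3 * x - 224 / 27 * x ^ 3 * Yf x ^ 9) * Yf x ^ 30 * Φ
      + (208 / 81 * x ^ 2 * Yf x ^ 9 - 10 / 9) * Yf x ^ 17 * W + 2 / 3 * x * Yf x ^ 13 * Ψ) := by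
  obtain ⟨hs, h2, _, h34, h30, h13⟩ := trig_facts x
  unfold dPsi
  rw [hs, ← h30, ← h13, ← h34, ← h2]
  ring

/-- `Ψ` in the variable `x` -/
noncomputable def PsiX (x y p q r : ℝ) : ℝ :=
  y ^ 5 * r + 4 / 9 * x * y ^ 14 * q + 2 / 3 * y ^ 14 * p - 40 / 27 * x ^ 2 * y ^ 23 * p

/-- `W` in the variable `x` -/
noncomputable def WX (x y p q : ℝ) : ℝ := q * y + 2 / 3 * x * y ^ 10 * p

lemma exists_heteroclinic_x (a : ℝ) :
    ∃ Φ W Ψ θ : ℝ → ℝ, SolD a Φ W Ψ θ ∧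
      (∀ τ : ℝ, 0 < Φ τ) ∧
      (∀ τ : ℝ, θ τ ∈ Set.Icc (-(Real.pi / 2)) (Real.pi / 2)) ∧
      Tendsto (fun τ => (Φ τ, W τ, Ψ τ, θ τ)) atTop
        (nhds ((1 : ℝ), (0 : ℝ), (0 : ℝ), Real.pi / 2)) ∧
      Tendsto (fun τ => (Φ τ, W τ, Ψ τ, θ τ)) atBot
        (nhds ((1 : ℝ), (0 : ℝ), (0 : ℝ), -(Real.pi / 2))) := by
  obtain ⟨H, H1, H2, C, hC, hpos, d0, d1, d2, b0, b1, b2⟩ := exists_H a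
  obtain ⟨g, hg, gtop, gbot⟩ := exists_time
  have hyd : ∀ t, HasDerivAt (fun t => Yf (g t)) (-(2 / 9) * g t * Yf (g t) ^ 10 * Yf (g t) ^ 4) t :=
    fun t => (Yf_hasDerivAt (g t)).comp t (hg t)
  have hyn : ∀ (n : ℕ) (t : ℝ), HasDerivAt (fun t => Yf (g t) ^ n)
      (n * Yf (g t) ^ (n - 1) * (-(2 / 9) * g t * Yf (g t) ^ 10 * Yf (g t) ^ 4)) t :=
    fun n t => (hyd t).pow n
  have D0 : ∀ t, HasDerivAt (fun t => H (g t)) (H1 (g t) * Yf (g t) ^ 4) t := fun t => (d0 _).comp t (hg t)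
  have D1 : ∀ t, HasDerivAt (fun t => H1 (g t)) (H2 (g t) * Yf (g t) ^ 4) t := fun t => (d1 _).comp t (hg t)
  have D2 : ∀ t, HasDerivAt (fun t => H2 (g t)) ((1 / H (g t) ^ 3 - (g t ^ 2 + a)) * Yf (g t) ^ 4) t :=
    fun t => (d2 _).comp t (hg t)
  have bH : ∀ x, |H x| ≤ 1 + C := by
    intro x
    have := b0 x
    have hy := Yf_pos x
    have q3 : Yf x ^ 3 ≤ 1 := pow_le_one₀ hy.le (Yf_le_one x)
    have q4 : Yf x ^ 4 ≤ 1 := pow_le_one₀ hy.le (Yf_le_one x)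
    have q5 : C * Yf x ^ 4 ≤ C := mul_le_of_le_one_right hC q4
    have := (abs_le.1 this).2
    rw [abs_of_pos (hpos x)]; linarith
  have L0 : ∀ x, |H x / Yf x ^ 3 - 1| ≤ 10 * (1 + C) * Yf x := by
    intro x
    have hy := Yf_pos x
    have e : H x / Yf x ^ 3 - 1 = (H x - Yf x ^ 3) / Yf x ^ 3 := by field_simp
    rw [e, abs_div, abs_of_pos (pow_pos hy 3), div_le_iff₀ (pow_pos hy 3)]
    have := pow_pos hy 4
    nlinarith [b0 x]
  have L1 : ∀ x, |WX x (Yf x) (H x) (H1 x)| ≤ 10 * (1 + C) * Yf x := by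
    intro x
    have hy := Yf_pos x
    unfold WX
    have e : 2 / 3 * x * Yf x ^ 10 * H x = 2 / 3 * (x * Yf x ^ 9) * Yf x * H x := by ring
    rw [e]
    refine (abs_add_le _ _).trans ?_
    have t1 : |H1 x * Yf x| ≤ C * Yf x := by
      rw [abs_mul, abs_of_pos hy]; gcongr; exact b1 x
    have t2 : |2 / 3 * (x * Yf x ^ 9) * Yf x * H x| ≤ 2 / 3 * 1 * Yf x * (1 + C) := by
      have h := Yf_x1 x
      have h2 := bH x
      rw [abs_mul, abs_mul, abs_mul, abs_mul x, abs_of_pos hy, abs_of_pos (pow_pos hy 9),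
        abs_of_pos (by norm_num : (0:ℝ) < 2 / 3)]
      gcongr
    nlinarith
  have L2 : ∀ x, |PsiX x (Yf x) (H x) (H1 x) (H2 x)| ≤ 10 * (1 + C) * Yf x := by
    intro x
    have hy := Yf_pos x
    have hy5 : Yf x ^ 5 ≤ Yf x := pow_le_of_le_one hy.le (Yf_le_one x) (by norm_num)
    have hy14 : Yf x ^ 14 ≤ Yf x := pow_le_of_le_one hy.le (Yf_le_one x) (by norm_num)
    have h := Yf_x1 x
    have h' := Yf_x2 x
    have h2 := bH x
    unfold PsiX
    have e : Yf x ^ 5 * H2 x + 4 / 9 * x * Yf x ^ 14 * H1 x + 2 / 3 * Yf x ^ 14 * H x - 40 / 27 * x ^ 2 * Yf x ^ 23 * H x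
      = Yf x * (H2 x * Yf x ^ 4) + (4 / 9 * (x * Yf x ^ 9) * Yf x ^ 5 * H1 x) + (2 / 3 - 40 / 27 * (x ^ 2 * Yf x ^ 9)) * Yf x ^ 14 * H x := by ring
    rw [e]
    refine (abs_add_three _ _ _).trans ?_
    have t1 : |Yf x * (H2 x * Yf x ^ 4)| ≤ Yf x * C := by
      rw [abs_mul, abs_of_pos hy, abs_mul, abs_of_pos (pow_pos hy 4)]
      gcongr; exact b2 x
    have t2 : |4 / 9 * (x * Yf x ^ 9) * Yf x ^ 5 * H1 x| ≤ 4 / 9 * 1 * Yf x * C := by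
      rw [abs_mul, abs_mul, abs_mul, abs_mul x, abs_of_pos (pow_pos hy 5), abs_of_pos (pow_pos hy 9),
        abs_of_pos (by norm_num : (0:ℝ) < 4 / 9)]
      gcongr
      exact b1 x
    have t3 : |(2 / 3 - 40 / 27 * (x ^ 2 * Yf x ^ 9)) * Yf x ^ 14 * H x| ≤ 2 * Yf x * (1 + C) := by
      rw [abs_mul, abs_mul, abs_of_pos (pow_pos hy 14)]
      gcongr
      have : 0 ≤ x ^ 2 * Yf x ^ 9 := by positivity
      rw [abs_le]; constructor <;> linarith
    nlinarith [mul_nonneg hy.le hC]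
  have lim : ∀ (l : Filter ℝ) (m : Filter ℝ) (b : ℝ), Tendsto g l m → Tendsto Yf m (nhds 0) →
      Tendsto arctan m (nhds b) → Tendsto (fun τ => (H (g τ) / Yf (g τ) ^ 3,
        WX (g τ) (Yf (g τ)) (H (g τ)) (H1 (g τ)), PsiX (g τ) (Yf (g τ)) (H (g τ)) (H1 (g τ)) (H2 (g τ)),
        arctan (g τ))) l (nhds ((1 : ℝ), (0 : ℝ), (0 : ℝ), b)) := by
    intro l m b hgl hY ha
    have hz : Tendsto (fun τ => 10 * (1 + C) * Yf (g τ)) l (nhds 0) := by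
      simpa using (hY.comp hgl).const_mul (10 * (1 + C))
    refine Tendsto.prodMk_nhds ?_ (Tendsto.prodMk_nhds ?_ (Tendsto.prodMk_nhds ?_ (ha.comp hgl)))
    · rw [tendsto_iff_norm_sub_tendsto_zero]
      exact squeeze_zero (fun _ => norm_nonneg _) (fun τ => L0 (g τ)) hz
    · exact squeeze_zero_norm (fun τ => L1 (g τ)) hz
    · exact squeeze_zero_norm (fun τ => L2 (g τ)) hz
  refine ⟨fun τ => H (g τ) / Yf (g τ) ^ 3, fun τ => WX (g τ) (Yf (g τ)) (H (g τ)) (H1 (g τ)),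
    fun τ => PsiX (g τ) (Yf (g τ)) (H (g τ)) (H1 (g τ)) (H2 (g τ)), fun τ => arctan (g τ),
    ?_, ?_, ?_, ?_, ?_⟩
  · intro τ
    have hy := Yf_pos (g τ)
    have hX := Yf_pow9 (g τ)
    have hH := hpos (g τ)
    refine ⟨?_, ?_, ?_, ?_⟩
    · refine ((D0 τ).div (hyn 3 τ) (by positivity)).congr_deriv ?_
      unfold WX
      norm_num
      field_simp
      ring
    · unfold WX
      refine (((D1 τ).mul (hyd τ)).add ((((hg τ).const_mul (2 / 3)).mul (hyn 10 τ)).mul (D0 τ))).congr_deriv ?_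
      unfold PsiX
      norm_num
      ring
    · rw [dPsi_arctan]
      unfold PsiX WX
      refine (((((hyn 5 τ).mul (D2 τ)).add ((((hg τ).const_mul (4 / 9)).mul (hyn 14 τ)).mul (D1 τ))).add
        (((hyn 14 τ).const_mul (2 / 3)).mul (D0 τ))).sub (((((hg τ).pow 2).const_mul (40 / 27)).mul
          (hyn 23 τ)).mul (D0 τ))).congr_deriv ?_
      norm_num
      set y := Yf (g τ)
      set x := g τ
      have e1 : (H x / y ^ 3) ^ 3 = H x ^ 3 / y ^ 9 := by rw [div_pow]; ring
      have e2 : y ^ 30 * (H x / y ^ 3) = y ^ 27 * H x := by field_simp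
      have e3 : ∀ c : ℝ, c * y ^ 30 * (H x / y ^ 3) = c * (y ^ 27 * H x) := fun c => by rw [mul_assoc, e2]
      rw [e1, inv_div, e3]
      linear_combination (-1) * hX
    · refine ((hasDerivAt_arctan (g τ)).comp τ (hg τ)).congr_deriv ?_
      rw [(trig_facts (g τ)).2.2.1]
      field_simp
      linear_combination (-1) * hX
  · intro τ
    exact div_pos (hpos _) (pow_pos (Yf_pos _) 3)
  · exact fun τ => ⟨(neg_pi_div_two_lt_arctan _).le, (arctan_lt_pi_div_two _).le⟩
  · exact lim _ _ _ gtop Yf_tendsto.1 (tendsto_arctan_atTop.mono_right nhdsWithin_le_nhds)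
  · exact lim _ _ _ gbot Yf_tendsto.2 (tendsto_arctan_atBot.mono_right nhdsWithin_le_nhds)

/-- for every `a` there is a heteroclinic connection of system (D)
from `p₋ = (1,0,0,-π/2)` to `p₊ = (1,0,0,π/2)`. -/
theorem exists_heteroclinic (a : ℝ) :
    ∃ Φ W Ψ θ : ℝ → ℝ, SolD a Φ W Ψ θ ∧
      (∀ τ : ℝ, 0 < Φ τ) ∧
      (∀ τ : ℝ, θ τ ∈ Set.Icc (-(Real.pi / 2)) (Real.pi / 2)) ∧
      Tendsto (fun τ => (Φ τ, W τ, Ψ τ, θ τ)) atTop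
        (nhds ((1 : ℝ), (0 : ℝ), (0 : ℝ), Real.pi / 2)) ∧
      Tendsto (fun τ => (Φ τ, W τ, Ψ τ, θ τ)) atBot
        (nhds ((1 : ℝ), (0 : ℝ), (0 : ℝ), -(Real.pi / 2))) := by
  exact exists_heteroclinic_x a
end

section
/- Let τ₀ ∈ ℝ and let Φ : (−∞, τ₀] → ℝ be three times continuously differentiable with Φ(τ) > 0 and Φ'''(τ) = 1/Φ(τ)³ − 1 for all τ ≤ τ₀. If there is a constant C₀ > 1 such that 1/C₀ ≤ Φ(τ) ≤ C₀, |Φ'(τ)| ≤ C₀ and |Φ''(τ)| ≤ C₀ for all τ ≤ τ₀, then Φ(τ) → 1, Φ'(τ) → 0 and Φ''(τ) → 0 as τ → −∞. -/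
open Filter Set

theorem aux_landau (t : ℝ) (f f1 f2 : ℝ → ℝ) (K a : ℝ)
    (h1 : ∀ τ < t, HasDerivAt f (f1 τ) τ)
    (h2 : ∀ τ < t, HasDerivAt f1 (f2 τ) τ)
    (hK : ∀ τ < t, |f2 τ| ≤ K)
    (hf : Tendsto f atBot (nhds a)) : Tendsto f1 atBot (nhds 0) := by
  have hK0 : 0 ≤ K := (abs_nonneg _).trans (hK (t - 1) (by linarith))
  rw [Metric.tendsto_nhds]
  intro ε hε
  obtain ⟨δ, hδ, hδK⟩ : ∃ δ > 0, K * δ ≤ ε / 2 := by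
    refine ⟨ε / (2 * (K + 1)), by positivity, ?_⟩
    rw [mul_div_assoc', div_le_div_iff₀ (by positivity) (by positivity)]
    nlinarith
  have hη : 0 < ε * δ / 8 := by positivity
  have := (Metric.tendsto_nhds.1 hf) _ hη
  obtain ⟨N, hN⟩ := eventually_atBot.1 this
  filter_upwards [eventually_lt_atBot t, eventually_le_atBot N] with τ hτ hτN
  have hlt : τ - δ < τ := by linarith
  obtain ⟨ξ, ⟨hξ1, hξ2⟩, hξ⟩ := exists_hasDerivAt_eq_slope f f1 hlt
    (fun x hx => (h1 x (by linarith [hx.2])).continuousAt.continuousWithinAt)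
    (fun x hx => h1 x (by linarith [hx.2]))
  obtain ⟨ζ, ⟨hζ1, hζ2⟩, hζ⟩ := exists_hasDerivAt_eq_slope f1 f2 hξ2
    (fun x hx => (h2 x (by linarith [hx.2])).continuousAt.continuousWithinAt)
    (fun x hx => h2 x (by linarith [hx.2]))
  have a1 := hN τ hτN
  have a2 := hN (τ - δ) (by linarith)
  rw [Real.dist_eq, abs_lt] at a1 a2
  have e1 : f1 ξ * δ = f τ - f (τ - δ) := by
    rw [hξ, sub_sub_cancel, div_mul_cancel₀ _ hδ.ne']
  have hne : τ - ξ ≠ 0 := (sub_pos.2 hξ2).ne'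
  have e2 : f1 τ - f1 ξ = f2 ζ * (τ - ξ) := by
    rw [hζ]; field_simp
  have b := hK ζ (by linarith)
  have b2 : |f1 τ - f1 ξ| ≤ ε / 2 := by
    rw [e2, abs_mul, abs_of_pos (by linarith : 0 < τ - ξ)]
    calc _ ≤ K * δ := mul_le_mul b (by linarith) (by linarith) hK0
      _ ≤ _ := hδK
  rw [abs_le] at b2
  have c1 : f1 ξ < ε / 2 := by
    by_contra! h
    nlinarith
  have c2 : -(ε / 2) < f1 ξ := by
    by_contra! h
    nlinarith
  rw [Real.dist_eq, sub_zero, abs_lt]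
  constructor <;> linarith [b2.1, b2.2]

/-- if a positive solution of `Φ''' = 1/Φ³ - 1` on `(-∞, τ₀]` stays (together with
its first two derivatives) in a compact region `1/C₀ ≤ Φ ≤ C₀`, `|Φ'| ≤ C₀`, `|Φ''| ≤ C₀`,
then `(Φ, Φ', Φ'') → (1, 0, 0)` as `τ → -∞`. -/
theorem tendsto_critical_point_of_bounded (τ₀ : ℝ) (Φ W Ψ : ℝ → ℝ)
    (hΦpos : ∀ τ ≤ τ₀, 0 < Φ τ)
    (hΦ : ∀ τ ∈ Set.Iic τ₀, HasDerivWithinAt Φ (W τ) (Set.Iic τ₀) τ)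
    (hW : ∀ τ ∈ Set.Iic τ₀, HasDerivWithinAt W (Ψ τ) (Set.Iic τ₀) τ)
    (hΨ : ∀ τ ∈ Set.Iic τ₀,
      HasDerivWithinAt Ψ (1 / (Φ τ) ^ 3 - 1) (Set.Iic τ₀) τ)
    (C₀ : ℝ) (hC₀ : 1 < C₀)
    (hbound : ∀ τ ≤ τ₀, 1 / C₀ ≤ Φ τ ∧ Φ τ ≤ C₀ ∧ |W τ| ≤ C₀ ∧ |Ψ τ| ≤ C₀) :
    Tendsto Φ atBot (nhds 1) ∧ Tendsto W atBot (nhds 0) ∧ Tendsto Ψ atBot (nhds 0) := by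
  have nh : ∀ τ < τ₀, Iic τ₀ ∈ nhds τ := fun τ h => Iic_mem_nhds h
  have dΦ : ∀ τ < τ₀, HasDerivAt Φ (W τ) τ := fun τ h => (hΦ τ h.le).hasDerivAt (nh τ h)
  have dW : ∀ τ < τ₀, HasDerivAt W (Ψ τ) τ := fun τ h => (hW τ h.le).hasDerivAt (nh τ h)
  have dΨ : ∀ τ < τ₀, HasDerivAt Ψ (1 / (Φ τ) ^ 3 - 1) τ :=
    fun τ h => (hΨ τ h.le).hasDerivAt (nh τ h)
  have hC : 0 < C₀ := by linarith
  have hinv : ∀ τ < τ₀, 1 / Φ τ ≤ C₀ := fun τ h => by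
    have := (hbound τ h.le).1
    rw [div_le_iff₀ hC] at this
    rw [div_le_iff₀ (hΦpos τ h.le)]; linarith
  have hinvk : ∀ (k : ℕ), ∀ τ < τ₀, 1 / Φ τ ^ k ≤ C₀ ^ k := fun k τ h => by
    rw [← one_div_pow]
    exact pow_le_pow_left₀ (by have := hΦpos τ h.le; positivity) (hinv τ h) k
  have hg : ∀ τ < τ₀, |1 / (Φ τ) ^ 3 - 1| ≤ C₀ ^ 3 + 1 := fun τ h => by
    have := hinvk 3 τ h
    have h0 : 0 < 1 / Φ τ ^ 3 := by have := hΦpos τ h.le; positivity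
    have : 0 < C₀ ^ 3 := by positivity
    rw [abs_le]; constructor <;> linarith
  -- Lyapunov function
  let L : ℝ → ℝ := fun τ => W τ * Ψ τ + 1 / 2 * ((Φ τ) ^ 2)⁻¹ + Φ τ
  have dL : ∀ τ < τ₀, HasDerivAt L (Ψ τ ^ 2) τ := fun τ h => by
    have hp := (hΦpos τ h.le).ne'
    have := (((dW τ h).mul (dΨ τ h)).add
      ((((dΦ τ h).pow 2).inv (pow_ne_zero 2 hp)).const_mul (1 / 2))).add (dΦ τ h)
    refine this.congr_deriv ?_
    simp only [Pi.pow_apply]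
    field_simp
    ring
  have hLb : ∀ τ < τ₀, -(C₀ * C₀) ≤ L τ := fun τ h => by
    have hp := hΦpos τ h.le
    obtain ⟨-, -, w, p⟩ := hbound τ h.le
    have h1 : |W τ * Ψ τ| ≤ C₀ * C₀ := by
      rw [abs_mul]; exact mul_le_mul w p (abs_nonneg _) hC.le
    have h2 : 0 ≤ 1 / 2 * ((Φ τ) ^ 2)⁻¹ := by positivity
    have := (abs_le.1 h1).1
    simp only [L]; linarith
  have hLm : MonotoneOn L (Iio τ₀) := by
    apply monotoneOn_of_deriv_nonneg (convex_Iio _)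
    · exact fun x hx => (dL x hx).continuousAt.continuousWithinAt
    · rw [interior_Iio]
      exact fun x hx => (dL x hx).differentiableAt.differentiableWithinAt
    · rw [interior_Iio]
      intro x hx
      rw [(dL x hx).deriv]; positivity
  have hmin : ∀ x : ℝ, min x (τ₀ - 1) < τ₀ := fun x =>
    (min_le_right _ _).trans_lt (by linarith)
  have hMm : Monotone (fun τ => L (min τ (τ₀ - 1))) := fun x y hxy =>
    hLm (hmin x) (hmin y) (min_le_min_right _ hxy)
  have hMt := tendsto_atBot_ciInf hMm
    ⟨-(C₀ * C₀), by rintro _ ⟨x, rfl⟩; exact hLb _ (hmin x)⟩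
  have hLt : Tendsto L atBot (nhds (⨅ τ, L (min τ (τ₀ - 1)))) := by
    refine hMt.congr' ?_
    filter_upwards [eventually_le_atBot (τ₀ - 1)] with x hx
    simp only [min_eq_left hx]
  have hΨ2 : Tendsto (fun τ => Ψ τ ^ 2) atBot (nhds 0) := by
    refine aux_landau τ₀ L _ (fun τ => 2 * Ψ τ * (1 / (Φ τ) ^ 3 - 1))
      (2 * C₀ * (C₀ ^ 3 + 1)) _ dL (fun τ h => ?_) (fun τ h => ?_) hLt
    · refine ((dΨ τ h).pow 2).congr_deriv ?_
      simp
    · rw [abs_mul, abs_mul, abs_two]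
      exact mul_le_mul (by linarith [(hbound τ h.le).2.2.2]) (hg τ h) (abs_nonneg _) (by positivity)
  have hΨt : Tendsto Ψ atBot (nhds 0) := by
    have := hΨ2.sqrt
    simp only [Real.sqrt_sq_eq_abs, Real.sqrt_zero] at this
    exact (tendsto_zero_iff_abs_tendsto_zero _).2 this
  have hgt : Tendsto (fun τ => 1 / (Φ τ) ^ 3 - 1) atBot (nhds 0) := by
    refine aux_landau τ₀ Ψ _ (fun τ => -3 * W τ * (1 / Φ τ ^ 4))
      (3 * C₀ * C₀ ^ 4) _ dΨ (fun τ h => ?_) (fun τ h => ?_) hΨt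
    · have hp := (hΦpos τ h.le).ne'
      have := (((dΦ τ h).pow 3).inv (pow_ne_zero 3 hp)).sub_const 1
      simp only [one_div]
      refine this.congr_deriv ?_
      simp only [Pi.pow_apply]
      field_simp
      ring
    · have hp := hΦpos τ h.le
      rw [abs_mul, abs_mul, abs_of_pos (by positivity : 0 < 1 / Φ τ ^ 4)]
      have : |(-3 : ℝ)| = 3 := by norm_num
      rw [this]
      exact mul_le_mul (by linarith [(hbound τ h.le).2.2.1]) (hinvk 4 τ h) (by positivity)
        (by positivity)
  have hΦt : Tendsto Φ atBot (nhds 1) := by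
    rw [tendsto_iff_dist_tendsto_zero]
    have hz := (hgt.abs).const_mul (C₀ ^ 3)
    rw [abs_zero, mul_zero] at hz
    refine squeeze_zero' (Eventually.of_forall fun _ => dist_nonneg) ?_ hz
    filter_upwards [eventually_lt_atBot τ₀] with τ h
    have hp := hΦpos τ h.le
    have h3 : Φ τ ^ 3 ≤ C₀ ^ 3 := pow_le_pow_left₀ hp.le (hbound τ h.le).2.1 3
    have e : Φ τ ^ 3 * (1 / Φ τ ^ 3 - 1) = (1 + Φ τ + Φ τ ^ 2) * (1 - Φ τ) := by
      field_simp; ring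
    have e2 : Φ τ ^ 3 * |1 / Φ τ ^ 3 - 1| = (1 + Φ τ + Φ τ ^ 2) * |1 - Φ τ| := by
      rw [← abs_of_pos (by positivity : 0 < Φ τ ^ 3), ← abs_mul, abs_of_pos (by positivity : 0 < Φ τ ^ 3), e, abs_mul,
        abs_of_pos (by positivity : 0 < 1 + Φ τ + Φ τ ^ 2)]
    rw [Real.dist_eq, abs_sub_comm]
    calc |1 - Φ τ| ≤ (1 + Φ τ + Φ τ ^ 2) * |1 - Φ τ| :=
          le_mul_of_one_le_left (abs_nonneg _) (by nlinarith)
      _ = Φ τ ^ 3 * |1 / Φ τ ^ 3 - 1| := e2.symm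
      _ ≤ _ := mul_le_mul_of_nonneg_right h3 (abs_nonneg _)
  exact ⟨hΦt, aux_landau τ₀ Φ W Ψ C₀ 1 dΦ dW (fun τ h => (hbound τ h.le).2.2.2) hΦt, hΨt⟩
end

section
/- Let Φ be a three times continuously differentiable positive function defined on an interval (−∞, τ₀] satisfying Φ'''(τ) = 1/Φ(τ)³ − 1 for all τ ≤ τ₀. If Φ(τ) → +∞, Φ'(τ) → −∞ and Φ''(τ) → +∞ as τ → −∞, then Φ(τ)/τ³ → −1/6 as τ → −∞. -/
open Filter Set

lemma aux_littleO (n : ℕ) (f f' : ℝ → ℝ) (a : ℝ) (hf : ∀ t < a, HasDerivAt f (f' t) t)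
    (h : f' =o[atBot] fun t : ℝ => t ^ n) : f =o[atBot] fun t : ℝ => t ^ (n + 1) := by
  rw [Asymptotics.isLittleO_iff] at h ⊢
  intro c hc
  have h1 := h (half_pos hc)
  obtain ⟨T, hT⟩ := eventually_atBot.1 (h1.and ((eventually_lt_atBot a).and (eventually_le_atBot (-1))))
  have hTa := (hT T le_rfl).2.1
  have hT1 := (hT T le_rfl).2.2
  filter_upwards [eventually_le_atBot T, eventually_le_atBot (-(2 / c * |f T|))] with t ht ht2
  have habs : |t| = -t := abs_of_neg (by linarith)
  have hmv : ‖f T - f t‖ ≤ (c / 2 * |t| ^ n) * ‖T - t‖ := by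
    refine (convex_Icc t T).norm_image_sub_le_of_norm_hasDerivWithin_le (f := f) (f' := f')
      (fun x hx => (hf x (lt_of_le_of_lt hx.2 hTa)).hasDerivWithinAt) (fun x hx => ?_)
      (left_mem_Icc.2 ht) (right_mem_Icc.2 ht)
    refine (hT x hx.2).1.trans ?_
    rw [norm_pow, Real.norm_eq_abs]
    have : |x| ≤ |t| := by
      rw [habs, abs_of_neg (by linarith [hx.2])]
      linarith [hx.1]
    gcongr
  rw [norm_pow]
  simp only [Real.norm_eq_abs] at *
  have h2 : |T - t| ≤ |t| := by
    rw [habs, abs_of_nonneg (by linarith)]; linarith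
  have h3 : |f T - f t| ≤ c / 2 * |t| ^ (n + 1) := by
    refine hmv.trans ?_
    rw [pow_succ, ← mul_assoc]
    gcongr
  have h4 : |f T| ≤ c / 2 * |t| ^ (n + 1) := by
    have h5 : |t| ≤ |t| ^ (n + 1) := le_self_pow₀ (by linarith) (by omega)
    have h6 : 2 / c * |f T| ≤ |t| := by linarith
    calc |f T| = c / 2 * (2 / c * |f T|) := by field_simp
      _ ≤ c / 2 * |t| ^ (n + 1) := by gcongr; linarith
  have h7 : |f t| ≤ |f T| + |f T - f t| := by
    have := abs_sub (f T) (f T - f t)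
    simpa using this
  linarith

lemma aux_tendsto (n : ℕ) (f f' : ℝ → ℝ) (a c : ℝ) (hf : ∀ t < a, HasDerivAt f (f' t) t)
    (h : Tendsto (fun t => f' t / t ^ n) atBot (nhds c)) :
    Tendsto (fun t => f t / t ^ (n + 1)) atBot (nhds (c / (n + 1))) := by
  have hn : (n : ℝ) + 1 ≠ 0 := by positivity
  have key := aux_littleO n (fun t => f t - c / (n + 1) * t ^ (n + 1))
    (fun t => f' t - c * t ^ n) a (fun t ht => by
      have := (hf t ht).sub ((hasDerivAt_pow (n + 1) t).const_mul (c / (n + 1)))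
      have e : c / ((n : ℝ) + 1) * (((n + 1 : ℕ) : ℝ) * t ^ (n + 1 - 1)) = c * t ^ n := by
        rw [Nat.add_sub_cancel]
        push_cast
        field_simp
      rw [e] at this
      exact this) (by
      rw [Asymptotics.isLittleO_iff_tendsto']
      · have h0 : Tendsto (fun t => f' t / t ^ n - c) atBot (nhds 0) := by
          simpa using h.sub_const c
        refine h0.congr' ?_
        filter_upwards [eventually_lt_atBot 0] with t ht
        have := ht.ne
        field_simp
      · filter_upwards [eventually_lt_atBot 0] with t ht h0
        exact absurd h0 (pow_ne_zero _ ht.ne))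
  have h2 := key.tendsto_div_nhds_zero.add_const (c / ((n : ℝ) + 1))
  rw [zero_add] at h2
  refine h2.congr' ?_
  filter_upwards [eventually_lt_atBot 0] with t ht
  have := ht.ne
  field_simp
  ring

/-- if a positive solution of `Φ''' = 1/Φ³ - 1` on `(-∞, τ₀]` satisfies
`Φ → +∞`, `Φ' → -∞`, `Φ'' → +∞` as `τ → -∞`, then `Φ(τ)/τ³ → -1/6` as `τ → -∞`. -/
theorem tendsto_cubic_growth (τ₀ : ℝ) (Φ W Ψ : ℝ → ℝ)
    (hΦpos : ∀ τ ≤ τ₀, 0 < Φ τ)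
    (hΦ : ∀ τ ∈ Set.Iic τ₀, HasDerivWithinAt Φ (W τ) (Set.Iic τ₀) τ)
    (hW : ∀ τ ∈ Set.Iic τ₀, HasDerivWithinAt W (Ψ τ) (Set.Iic τ₀) τ)
    (hΨ : ∀ τ ∈ Set.Iic τ₀,
      HasDerivWithinAt Ψ (1 / (Φ τ) ^ 3 - 1) (Set.Iic τ₀) τ)
    (hΦinf : Tendsto Φ atBot atTop)
    (hWinf : Tendsto W atBot atBot)
    (hΨinf : Tendsto Ψ atBot atTop) :
    Tendsto (fun τ => Φ τ / τ ^ 3) atBot (nhds (-(1 / 6))) := by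
  have up : ∀ {f f' : ℝ → ℝ}, (∀ τ ∈ Set.Iic τ₀, HasDerivWithinAt f (f' τ) (Set.Iic τ₀) τ) →
      ∀ t < τ₀, HasDerivAt f (f' t) t := fun h t ht =>
    (h t ht.le).hasDerivAt (Iic_mem_nhds ht)
  have h0 : Tendsto (fun t => (1 / (Φ t) ^ 3 - 1) / t ^ 0) atBot (nhds (-1)) := by
    have h3 : Tendsto (fun t => (Φ t) ^ 3) atBot atTop :=
      (tendsto_pow_atTop (by norm_num)).comp hΦinf
    have := h3.inv_tendsto_atTop.sub_const 1
    simpa using this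
  have h1 := aux_tendsto 0 Ψ _ τ₀ _ (up hΨ) h0
  have h2 := aux_tendsto 1 W Ψ τ₀ _ (up hW) h1
  have h3 := aux_tendsto 2 Φ W τ₀ _ (up hΦ) h2
  norm_num at h3 ⊢
  exact h3
end
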